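/- arXiv:1607.00048 — 2 statements merged into one kernel-verified Lean document; each statement's English description precedes it below -/
import Mathlib

section
/- Let S be a set of n points in the plane with the property that at most n − x of them are collinear (x ≥ 0). Then the number of lines spanned by S is at least c·x·n for an absolute constant c > 0. -/
/-!
Project the points to a plane so that they become the graph of a function. The plane part is
Székely's: a noncrossing straight-line drawing on `n` vertices has at most `3 n` edges, random
sampling of the vertices turns this into the crossing lemma, and applying that to the segments
into which a family of lines is cut bounds the number of lines with more than `j` points by a
multiple of `n ^ 2 / j ^ 3 + n / j`.

Summing over `j`, only few pairs of points lie on lines that are rich, but not so rich as to contain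
a positive proportion of the points. So either most pairs lie on lines with boundedly many points,
and there are about `n ^ 2` lines, or some line contains a positive proportion of the points, and
joining it to points outside it already gives about `x * n` lines.
-/

namespace ErdosBeck

open Finset

section Averaging

variable {α ι R : Type*} [CommRing R]

/-- The probability that a random subset of `X`, containing each element independently with
probability `p`, equals `T`. -/
def bernoulliWeight (X : Finset α) (p : R) (T : Finset α) : R :=
  p ^ #T * (1 - p) ^ (#X - #T)

lemma sum_bernoulliWeight_of_subset [DecidableEq α] {X A : Finset α} (hA : A ⊆ X) (p : R) :
    ∑ T ∈ X.powerset with A ⊆ T, bernoulliWeight X p T = p ^ #A := by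
  have hfilter : {T ∈ X.powerset | A ⊆ T} = (X \ A).powerset.image (A ∪ ·) := by
    rw [← Icc_eq_image_powerset hA]
    ext T
    simp [and_comm]
  have disjoint_of_mem {T} (hT : T ∈ (X \ A).powerset) : Disjoint A T :=
    disjoint_of_subset_right (mem_powerset.1 hT) disjoint_sdiff
  rw [hfilter, sum_image fun T hT T' hT' h ↦ by
    rw [← (disjoint_of_mem hT).sup_sdiff_cancel_left, ← (disjoint_of_mem hT').sup_sdiff_cancel_left]
    exact congrArg (· \ A) h]
  calc ∑ T ∈ (X \ A).powerset, bernoulliWeight X p (A ∪ T)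
      = ∑ T ∈ (X \ A).powerset, p ^ #A * (p ^ #T * (1 - p) ^ (#(X \ A) - #T)) := by
        refine sum_congr rfl fun T hT ↦ ?_
        rw [bernoulliWeight, card_union_of_disjoint (disjoint_of_mem hT),
          card_sdiff_of_subset hA, pow_add, mul_assoc, Nat.sub_sub]
    _ = p ^ #A := by rw [← mul_sum, sum_pow_mul_eq_add_pow, add_sub_cancel, one_pow, mul_one]

lemma sum_bernoulliWeight_mul_card [DecidableEq α] {X : Finset α} {I : Finset ι}
    {A : ι → Finset α} {k : ℕ} (hA : ∀ i ∈ I, A i ⊆ X) (hk : ∀ i ∈ I, #(A i) = k) (p : R) :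
    ∑ T ∈ X.powerset, bernoulliWeight X p T * #{i ∈ I | A i ⊆ T} = #I * p ^ k := by
  have hcard (T : Finset α) : bernoulliWeight X p T * #{i ∈ I | A i ⊆ T} =
      ∑ i ∈ I, if A i ⊆ T then bernoulliWeight X p T else 0 := by
    rw [← sum_filter, sum_const, nsmul_eq_mul, mul_comm]
  simp_rw [hcard]
  rw [sum_comm, ← nsmul_eq_mul, ← sum_const]
  refine sum_congr rfl fun i hi ↦ ?_
  rw [← sum_filter, sum_bernoulliWeight_of_subset (hA i hi), hk i hi]

lemma bernoulliWeight_nonneg [LinearOrder R] [IsStrictOrderedRing R] (X : Finset α) {p : R}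
    (hp₀ : 0 ≤ p) (hp₁ : p ≤ 1) (T : Finset α) : 0 ≤ bernoulliWeight X p T :=
  mul_nonneg (pow_nonneg hp₀ _) (pow_nonneg (sub_nonneg.2 hp₁) _)

end Averaging

/-- The pairs `a < b` of elements of `A` with no element of `A` in between. -/
def consecutivePairs {α : Type*} [LinearOrder α] (A : Finset α) : Finset (α × α) :=
  {e ∈ A ×ˢ A | e.1 < e.2 ∧ ∀ z ∈ A, e.1 < z → e.2 ≤ z}

lemma mem_consecutivePairs {α : Type*} [LinearOrder α] {A : Finset α} {e : α × α} :
    e ∈ consecutivePairs A ↔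
      e.1 ∈ A ∧ e.2 ∈ A ∧ e.1 < e.2 ∧ ∀ z ∈ A, e.1 < z → e.2 ≤ z := by
  rw [consecutivePairs, mem_filter, mem_product, and_assoc]

lemma card_sub_one_le_card_consecutivePairs {α : Type*} [LinearOrder α] (A : Finset α) :
    #A - 1 ≤ #(consecutivePairs A) := by
  rcases A.eq_empty_or_nonempty with rfl | hA
  · simp
  rw [← card_erase_of_mem (A.max'_mem hA)]
  refine (card_le_card fun u hu ↦ ?_).trans (card_image_le (f := Prod.fst))
  obtain ⟨hne, huA⟩ := mem_erase.1 hu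
  have hlt : u < A.max' hA := (A.le_max' u huA).lt_of_ne hne
  obtain ⟨v, hv, hmin⟩ := exists_min_image {z ∈ A | u < z} id
    ⟨_, mem_filter.2 ⟨A.max'_mem hA, hlt⟩⟩
  simp only [mem_filter, id_eq, and_imp] at hv hmin
  exact mem_image.2 ⟨(u, v), mem_consecutivePairs.2 ⟨huA, hv.1, hv.2, hmin⟩, rfl⟩

section AffineMap

variable {K : Type*} [Field K]

lemma affineMap_apply_eq (l : K →ᵃ[K] K) (s t : K) : l t = l s + l.linear 1 * (t - s) := by
  have h := l.linearMap_vsub t s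
  rw [vsub_eq_sub, vsub_eq_sub, ← mul_one (t - s), ← smul_eq_mul, map_smul, smul_eq_mul] at h
  linear_combination -h

lemma affineMap_eq_of_eq_of_eq {l m : K →ᵃ[K] K} {s t : K} (hst : s ≠ t) (hs : l s = m s)
    (ht : l t = m t) : l = m := by
  have hslope : l.linear 1 = m.linear 1 := by
    rw [affineMap_apply_eq l s t, affineMap_apply_eq m s t, hs, add_right_inj] at ht
    exact mul_right_cancel₀ (sub_ne_zero.2 hst.symm) ht
  ext r
  rw [affineMap_apply_eq l s r, affineMap_apply_eq m s r, hs, hslope]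

lemma exists_mem_Ioo_affineMap_eq [LinearOrder K] [IsStrictOrderedRing K] {l m : K →ᵃ[K] K}
    {s t : K} (hst : s < t) (hs : l s < m s) (ht : m t < l t) :
    ∃ r ∈ Set.Ioo s t, l r = m r := by
  have hl := affineMap_apply_eq l s
  have hm := affineMap_apply_eq m s
  have hslope : 0 < l.linear 1 - m.linear 1 := by
    by_contra! hle
    nlinarith [hl t, hm t]
  refine ⟨s + (m s - l s) / (l.linear 1 - m.linear 1), ⟨?_, ?_⟩, ?_⟩
  · exact lt_add_of_pos_right _ (div_pos (sub_pos.2 hs) hslope)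
  · rw [← lt_sub_iff_add_lt', div_lt_iff₀ hslope]
    linarith [hl t, hm t]
  · rw [hl (s + _), hm (s + _)]
    field_simp
    ring

end AffineMap

section Chord

variable {K : Type*} [Field K]

/-- The line through the points of the graph of `h` over the two ends of `e`, as an affine
function of the abscissa. -/
def chord (h : K → K) (e : K × K) : K →ᵃ[K] K :=
  slope h e.1 e.2 • (AffineMap.id K K - AffineMap.const K K e.1) + AffineMap.const K K (h e.1)

lemma chord_apply (h : K → K) (e : K × K) (t : K) :
    chord h e t = h e.1 + slope h e.1 e.2 * (t - e.1) := by
  simp [chord, add_comm]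

@[simp] lemma chord_apply_fst (h : K → K) (e : K × K) : chord h e e.1 = h e.1 := by
  simp [chord_apply]

@[simp] lemma chord_apply_snd (h : K → K) (e : K × K) : chord h e e.2 = h e.2 := by
  have := sub_smul_slope h e.1 e.2
  rw [smul_eq_mul, vsub_eq_sub] at this
  rw [chord_apply]
  linear_combination this

lemma eq_chord {h : K → K} {e : K × K} (he : e.1 ≠ e.2) {l : K →ᵃ[K] K} (h₁ : h e.1 = l e.1)
    (h₂ : h e.2 = l e.2) : l = chord h e :=
  affineMap_eq_of_eq_of_eq he (by rw [← h₁, chord_apply_fst]) (by rw [← h₂, chord_apply_snd])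

lemma chord_neg_apply (h : K → K) (e : K × K) (t : K) : chord (-h) e t = -chord h e t := by
  simp only [chord_apply, Pi.neg_apply, slope_neg_fun]
  ring

lemma chord_lt_chord_iff [LinearOrder K] [IsStrictOrderedRing K] {h : K → K} {e f : K × K}
    (hef : e.1 = f.1) {t : K} (ht : e.1 < t) :
    chord h e t < chord h f t ↔ slope h e.1 e.2 < slope h f.1 f.2 := by
  rw [chord_apply, chord_apply, ← hef, add_lt_add_iff_left, mul_lt_mul_iff_left₀ (sub_pos.2 ht)]

end Chord

section GeometricGraph

variable {K : Type*} [Field K] [LinearOrder K]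

/-- A geometric graph: its vertices are the points `(z, h z)` with `z ∈ X`, and an edge `e ∈ E` is
the straight segment between the vertices over `e.1 < e.2`, which passes through no other vertex. -/
structure IsGeometricGraph (X : Finset K) (h : K → K) (E : Finset (K × K)) : Prop where
  fst_mem : ∀ e ∈ E, e.1 ∈ X
  snd_mem : ∀ e ∈ E, e.2 ∈ X
  fst_lt_snd : ∀ e ∈ E, e.1 < e.2
  ne_chord : ∀ e ∈ E, ∀ z ∈ X, z ∈ Set.Ioo e.1 e.2 → h z ≠ chord h e z

/-- The segments `e` and `f` have a common interior point. -/
def Crosses (h : K → K) (e f : K × K) : Prop :=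
  ∃ t ∈ Set.Ioo e.1 e.2 ∩ Set.Ioo f.1 f.2, chord h e t = chord h f t

open scoped Classical in
/-- The crossings of a geometric graph; both orderings of a crossing pair are listed. -/
noncomputable def crossings (h : K → K) (E : Finset (K × K)) : Finset ((K × K) × (K × K)) :=
  {c ∈ E.offDiag | Crosses h c.1 c.2}

lemma mem_crossings {h : K → K} {E : Finset (K × K)} {e f : K × K} :
    (e, f) ∈ crossings h E ↔ e ∈ E ∧ f ∈ E ∧ e ≠ f ∧ Crosses h e f := by
  simp only [crossings, mem_filter, mem_offDiag, and_assoc]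

/-- A set of segments no two of which cross. -/
def IsNoncrossing (h : K → K) (E : Finset (K × K)) : Prop :=
  (E : Set (K × K)).Pairwise fun e f ↦ ¬ Crosses h e f

/-- Among the edges with the same left end as `e`, `f` is the next one above `e`. -/
def IsNextSteeper (h : K → K) (E : Finset (K × K)) (e f : K × K) : Prop :=
  f ∈ E ∧ f.1 = e.1 ∧ slope h e.1 e.2 < slope h f.1 f.2 ∧
    ∀ g ∈ E, g.1 = e.1 → slope h e.1 e.2 < slope h g.1 g.2 → slope h f.1 f.2 ≤ slope h g.1 g.2

/-- The edge `e` is the first one met when descending vertically from the vertex over `z`. -/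
def IsDirectlyBelow (h : K → K) (E : Finset (K × K)) (e : K × K) (z : K) : Prop :=
  z ∈ Set.Ioo e.1 e.2 ∧ chord h e z < h z ∧
    ∀ g ∈ E, z ∈ Set.Ioo g.1 g.2 → chord h g z < h z → chord h g z ≤ chord h e z

variable {X : Finset K} {h : K → K} {E : Finset (K × K)} {e f : K × K}

lemma Crosses.of_neg (hc : Crosses (-h) e f) : Crosses h e f := by
  obtain ⟨t, ht, heq⟩ := hc
  exact ⟨t, ht, neg_injective (by rwa [← chord_neg_apply, ← chord_neg_apply])⟩

lemma IsNoncrossing.neg (hE : IsNoncrossing h E) : IsNoncrossing (-h) E :=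
  hE.imp fun _ _ h hc ↦ h hc.of_neg

lemma crossings_induce (T : Finset K) :
    crossings h {e ∈ E | {e.1, e.2} ⊆ T} =
      {c ∈ crossings h E | {c.1.1, c.1.2, c.2.1, c.2.2} ⊆ T} := by
  ext ⟨e, f⟩
  simp only [mem_crossings, mem_filter, insert_subset_iff, singleton_subset_iff]
  tauto

namespace IsGeometricGraph

lemma neg (hG : IsGeometricGraph X h E) : IsGeometricGraph X (-h) E where
  fst_mem := hG.fst_mem
  snd_mem := hG.snd_mem
  fst_lt_snd := hG.fst_lt_snd
  ne_chord e he z hz hmem := by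
    rw [chord_neg_apply, Pi.neg_apply]
    exact neg_injective.ne (hG.ne_chord e he z hz hmem)

lemma mono (hG : IsGeometricGraph X h E) {E' : Finset (K × K)} (hE : E' ⊆ E) :
    IsGeometricGraph X h E' where
  fst_mem e he := hG.fst_mem e (hE he)
  snd_mem e he := hG.snd_mem e (hE he)
  fst_lt_snd e he := hG.fst_lt_snd e (hE he)
  ne_chord e he := hG.ne_chord e (hE he)

lemma induce (hG : IsGeometricGraph X h E) {T : Finset K} (hT : T ⊆ X) :
    IsGeometricGraph T h {e ∈ E | {e.1, e.2} ⊆ T} where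
  fst_mem e he := (mem_filter.1 he).2 (by simp)
  snd_mem e he := (mem_filter.1 he).2 (by simp)
  fst_lt_snd e he := hG.fst_lt_snd e (mem_filter.1 he).1
  ne_chord e he z hz := hG.ne_chord e (mem_filter.1 he).1 z (hT hz)

lemma eq_of_chord_eq (hG : IsGeometricGraph X h E) (he : e ∈ E) (hf : f ∈ E)
    (hchord : chord h e = chord h f) (hef : e.1 < f.2) (hfe : f.1 < e.2) : e = f := by
  have no_vertex {e f} (he : e ∈ E) (hchord : chord h e = chord h f) :
      (f.1 ∈ X → f.1 ∉ Set.Ioo e.1 e.2) ∧ (f.2 ∈ X → f.2 ∉ Set.Ioo e.1 e.2) :=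
    ⟨fun hX hmem ↦ hG.ne_chord e he _ hX hmem (by rw [hchord, chord_apply_fst]),
      fun hX hmem ↦ hG.ne_chord e he _ hX hmem (by rw [hchord, chord_apply_snd])⟩
  have hfst : e.1 = f.1 := le_antisymm
    (not_lt.1 fun hlt ↦ (no_vertex hf hchord.symm).1 (hG.fst_mem e he) ⟨hlt, hef⟩)
    (not_lt.1 fun hlt ↦ (no_vertex he hchord).1 (hG.fst_mem f hf) ⟨hlt, hfe⟩)
  have hsnd : e.2 = f.2 := le_antisymm
    (not_lt.1 fun hlt ↦ (no_vertex he hchord).2 (hG.snd_mem f hf) ⟨hef, hlt⟩)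
    (not_lt.1 fun hlt ↦ (no_vertex hf hchord.symm).2 (hG.snd_mem e he) ⟨hfe, hlt⟩)
  exact Prod.ext hfst hsnd

lemma eq_of_slope_eq (hG : IsGeometricGraph X h E) (he : e ∈ E) (hf : f ∈ E) (hfst : e.1 = f.1)
    (hslope : slope h e.1 e.2 = slope h f.1 f.2) : e = f := by
  have hchord : chord h e = chord h f := by rw [chord, chord, hslope, hfst]
  exact hG.eq_of_chord_eq he hf hchord (hfst ▸ hG.fst_lt_snd f hf) (hfst ▸ hG.fst_lt_snd e he)

lemma card_ends_of_crosses (hG : IsGeometricGraph X h E) (he : e ∈ E) (hf : f ∈ E) (hne : e ≠ f)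
    (hc : Crosses h e f) : #{e.1, e.2, f.1, f.2} = 4 := by
  obtain ⟨t, ⟨⟨het, hte⟩, ⟨hft, htf⟩⟩, heq⟩ := hc
  have hchord : chord h e ≠ chord h f := fun hchord ↦
    hne (hG.eq_of_chord_eq he hf hchord (het.trans htf) (hft.trans hte))
  have hfst : e.1 ≠ f.1 := fun hfst ↦ hchord <| affineMap_eq_of_eq_of_eq het.ne
    (by rw [chord_apply_fst, hfst, chord_apply_fst]) heq
  have hsnd : e.2 ≠ f.2 := fun hsnd ↦ hchord <| affineMap_eq_of_eq_of_eq hte.ne'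
    (by rw [chord_apply_snd, hsnd, chord_apply_snd]) heq
  have hfst_snd : e.1 ≠ f.2 := (het.trans htf).ne
  have hsnd_fst : e.2 ≠ f.1 := (hft.trans hte).ne'
  rw [card_insert_of_notMem (by simp [hfst, (het.trans hte).ne, hfst_snd]),
    card_insert_of_notMem (by simp [hsnd, hsnd_fst]), card_pair (hft.trans htf).ne]

/-- A crossing is determined by its two lines, since these meet in a single point and at most one
edge on each line has that point in its interior. -/
lemma card_crossings_le (hG : IsGeometricGraph X h E) {L : Finset (K →ᵃ[K] K)}
    (hL : ∀ e ∈ E, chord h e ∈ L) : #(crossings h E) ≤ #L ^ 2 := by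
  rw [sq, ← card_product]
  refine card_le_card_of_injOn (fun c ↦ (chord h c.1, chord h c.2)) ?_ ?_
  · rintro ⟨e, f⟩ hc
    obtain ⟨he, hf, -⟩ := mem_crossings.1 hc
    exact mem_product.2 ⟨hL e he, hL f hf⟩
  · rintro ⟨e, f⟩ hc ⟨e', f'⟩ hc' heq
    obtain ⟨he, hf, hne, t, ⟨⟨het, hte⟩, hft, htf⟩, ht⟩ := mem_crossings.1 hc
    obtain ⟨he', hf', -, t', ⟨⟨het', hte'⟩, hft', htf'⟩, ht'⟩ := mem_crossings.1 hc'
    obtain ⟨hee', hff'⟩ : chord h e = chord h e' ∧ chord h f = chord h f' := Prod.mk.inj heq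
    obtain rfl : t = t' := by
      by_contra htt'
      rw [← hee', ← hff'] at ht'
      exact hne (hG.eq_of_chord_eq he hf (affineMap_eq_of_eq_of_eq htt' ht ht')
        (het.trans htf) (hft.trans hte))
    rw [hG.eq_of_chord_eq he he' hee' (het.trans hte') (het'.trans hte),
      hG.eq_of_chord_eq hf hf' hff' (hft.trans htf') (hft'.trans htf)]

end IsGeometricGraph

lemma exists_isNextSteeper (hf : f ∈ E) (hef : f.1 = e.1)
    (hslope : slope h e.1 e.2 < slope h f.1 f.2) : ∃ g, IsNextSteeper h E e g := by
  obtain ⟨g, hg, hmin⟩ := exists_min_image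
    {g ∈ E | g.1 = e.1 ∧ slope h e.1 e.2 < slope h g.1 g.2} (fun g ↦ slope h g.1 g.2)
    ⟨f, mem_filter.2 ⟨hf, hef, hslope⟩⟩
  obtain ⟨hgE, hge, hlt⟩ := mem_filter.1 hg
  exact ⟨g, hgE, hge, hlt, fun g' hg' hge' hlt' ↦ hmin g' (mem_filter.2 ⟨hg', hge', hlt'⟩)⟩

lemma card_le_of_isDirectlyBelow (hE : IsNoncrossing h E) {F : Finset (K × K)} (hF : F ⊆ E)
    (hbelow : ∀ e ∈ F, ∃ z ∈ X, IsDirectlyBelow h E e z) : #F ≤ #X := by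
  choose! z hzX hmem hlt hmax using hbelow
  refine card_le_card_of_injOn z hzX fun e he f hf hef ↦ ?_
  by_contra hne
  refine hE (hF he) (hF hf) hne ⟨z e, ⟨hmem e he, hef ▸ hmem f hf⟩, le_antisymm ?_ ?_⟩
  · rw [hef]
    exact hmax f hf e (hF he) (hef ▸ hmem e he) (hef ▸ hlt e he)
  · exact hmax e he f (hF hf) (hef ▸ hmem f hf) (hef ▸ hlt f hf)

lemma IsNextSteeper.left_unique (hG : IsGeometricGraph X h E) (he : e ∈ E) {e' : K × K}
    (he' : e' ∈ E) (hef : IsNextSteeper h E e f) (hef' : IsNextSteeper h E e' f) : e = e' := by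
  obtain ⟨-, hfst, hlt, hmin⟩ := hef
  obtain ⟨-, hfst', hlt', hmin'⟩ := hef'
  have hee' : e.1 = e'.1 := hfst.symm.trans hfst'
  refine hG.eq_of_slope_eq he he' hee' (le_antisymm ?_ ?_)
  · by_contra! hgt
    exact (hmin' e he hee' hgt).not_gt hlt
  · by_contra! hgt
    exact (hmin e' he' hee'.symm hgt).not_gt hlt'

lemma card_steepest_le (hG : IsGeometricGraph X h E)
    [DecidablePred fun e ↦ ∀ f, ¬ IsNextSteeper h E e f] :
    #{e ∈ E | ∀ f, ¬ IsNextSteeper h E e f} ≤ #X := by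
  refine card_le_card_of_injOn Prod.fst (fun e he ↦ hG.fst_mem e (mem_filter.1 he).1) ?_
  have slope_le {e f} (he : ∀ g, ¬ IsNextSteeper h E e g) (hf : f ∈ E) (hef : e.1 = f.1) :
      slope h f.1 f.2 ≤ slope h e.1 e.2 := by
    by_contra! hlt
    obtain ⟨g, hg⟩ := exists_isNextSteeper hf hef.symm hlt
    exact he g hg
  intro e he f hf hef
  obtain ⟨he, hnone⟩ := mem_filter.1 he
  obtain ⟨hf, hnone'⟩ := mem_filter.1 hf
  exact hG.eq_of_slope_eq he hf hef (le_antisymm (slope_le hnone' he hef.symm)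
    (slope_le hnone hf hef))

variable [IsStrictOrderedRing K]

lemma IsNextSteeper.neg (he : e ∈ E) (hef : IsNextSteeper h E e f) :
    IsNextSteeper (-h) E f e := by
  obtain ⟨-, hfst, hlt, hmin⟩ := hef
  simp only [IsNextSteeper, slope_neg_fun, Pi.neg_apply, neg_lt_neg_iff, neg_le_neg_iff]
  refine ⟨he, hfst.symm, hlt, fun g hg hgf hgf' ↦ ?_⟩
  by_contra! hlt'
  exact (hmin g hg (hgf.trans hfst) hlt').not_gt hgf'

lemma IsNoncrossing.chord_le_chord (hE : IsNoncrossing h E) (he : e ∈ E) (hf : f ∈ E) {s t : K}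
    (hst : s < t) (hes : e.1 ≤ s) (hfs : f.1 ≤ s) (hte : t ≤ e.2) (htf : t ≤ f.2)
    (hlt : chord h e s < chord h f s) : chord h e t ≤ chord h f t := by
  by_contra! hgt
  obtain ⟨r, ⟨hsr, hrt⟩, hr⟩ := exists_mem_Ioo_affineMap_eq hst hlt hgt
  refine hE he hf (fun hef ↦ hlt.ne (by rw [hef])) ⟨r, ⟨⟨?_, ?_⟩, ?_, ?_⟩, hr⟩ <;> order

lemma exists_leftmost_vertex_above (hG : IsGeometricGraph X h E) (hf : f ∈ E)
    (hef : f.1 = e.1) (hslope : slope h e.1 e.2 < slope h f.1 f.2) :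
    ∃ z ∈ X, (e.1 < z ∧ z ≤ f.2 ∧ chord h e z < h z ∧ h z ≤ chord h f z) ∧
      ∀ w ∈ X, e.1 < w → w < z → chord h e w < h w → chord h f w < h w := by
  have hlt : e.1 < f.2 := hef ▸ hG.fst_lt_snd f hf
  obtain ⟨z, hz, hmin⟩ := exists_min_image
    {z ∈ X | e.1 < z ∧ z ≤ f.2 ∧ chord h e z < h z ∧ h z ≤ chord h f z} id
    ⟨f.2, mem_filter.2 ⟨hG.snd_mem f hf, hlt, le_rfl,
      chord_apply_snd h f ▸ (chord_lt_chord_iff hef.symm hlt).2 hslope, (chord_apply_snd h f).ge⟩⟩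
  obtain ⟨hzX, hez, hzf, habove⟩ := mem_filter.1 hz
  refine ⟨z, hzX, ⟨hez, hzf, habove⟩, fun w hw hew hwz hlt ↦ ?_⟩
  by_contra! hle
  exact (hmin w (mem_filter.2 ⟨hw, hew, hwz.le.trans hzf, hlt, hle⟩)).not_gt hwz

/-- The leftmost vertex of the wedge between `e` and `f` works: an edge passing between it and `e`
would start inside the wedge, further left, or would cross `e` or `f`. -/
lemma exists_isDirectlyBelow (hG : IsGeometricGraph X h E) (hE : IsNoncrossing h E) (he : e ∈ E)
    (hef : IsNextSteeper h E e f) (hshort : f.2 < e.2) : ∃ z ∈ X, IsDirectlyBelow h E e z := by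
  obtain ⟨hf, hfst, hslope, hnext⟩ := hef
  obtain ⟨z, hzX, ⟨hez, hzf, hez_lt, hzf_le⟩, hleftmost⟩ :=
    exists_leftmost_vertex_above hG hf hfst hslope
  have hze : z < e.2 := hzf.trans_lt hshort
  refine ⟨z, hzX, ⟨hez, hze⟩, hez_lt, fun g hg ⟨hgz, hzg⟩ hgz_lt ↦ ?_⟩
  by_contra! hbetween
  have hgf : chord h g z < chord h f z := hgz_lt.trans_le hzf_le
  rcases lt_trichotomy g.1 e.1 with hlt | heq | hgt
  · have hvertex : chord h e e.1 = chord h f e.1 := by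
      rw [chord_apply_fst, ← hfst, chord_apply_fst]
    rcases lt_trichotomy (chord h g e.1) (chord h e e.1) with hbelow | hon | habove
    · exact (hE.chord_le_chord hg he hez hlt.le le_rfl hzg.le hze.le hbelow).not_gt hbetween
    · exact hG.ne_chord g hg e.1 (hG.fst_mem e he) ⟨hlt, hez.trans hzg⟩
        (by rw [hon, chord_apply_fst])
    · exact (hE.chord_le_chord hf hg hez hfst.le hlt.le hzf hzg.le (hvertex ▸ habove)).not_gt hgf
  · rw [chord_lt_chord_iff heq.symm hez] at hbetween
    rw [chord_lt_chord_iff (heq.trans hfst.symm) hgz] at hgf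
    exact (hnext g hg heq hbetween).not_gt hgf
  · rcases lt_trichotomy (h g.1) (chord h e g.1) with hbelow | hon | habove
    · refine (hE.chord_le_chord hg he hgz le_rfl hgt.le hzg.le hze.le ?_).not_gt hbetween
      rwa [chord_apply_fst]
    · exact hG.ne_chord e he g.1 (hG.fst_mem g hg) ⟨hgt, hgz.trans hze⟩ hon
    · have hfg : chord h f g.1 < h g.1 := hleftmost g.1 (hG.fst_mem g hg) hgt hgz habove
      refine (hE.chord_le_chord hf hg hgz (hfst.trans_le hgt.le) le_rfl hzf hzg.le ?_).not_gt hgf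
      rwa [chord_apply_fst]

lemma exists_isDirectlyBelow_or_neg (hG : IsGeometricGraph X h E) (hE : IsNoncrossing h E)
    (he : e ∈ E) (hef : IsNextSteeper h E e f) :
    (∃ z ∈ X, IsDirectlyBelow h E e z) ∨ ∃ z ∈ X, IsDirectlyBelow (-h) E f z := by
  rcases lt_trichotomy f.2 e.2 with hlt | heq | hgt
  · exact .inl (exists_isDirectlyBelow hG hE he hef hlt)
  · obtain ⟨-, hfst, hslope, -⟩ := hef
    exact absurd hslope (by rw [hfst, heq]; exact lt_irrefl _)
  · exact .inr (exists_isDirectlyBelow hG.neg hE.neg hef.1 (hef.neg he) hgt)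

/-- Each edge is the steepest one at its left end, or lies directly below a vertex, or is followed
in slope by an edge lying directly above a vertex; a vertex accounts for one edge of each kind. -/
lemma card_le_three_mul_card (hG : IsGeometricGraph X h E) (hE : IsNoncrossing h E) :
    #E ≤ 3 * #X := by
  classical
  let steepest := {e ∈ E | ∀ f, ¬ IsNextSteeper h E e f}
  let below := {e ∈ E | ∃ z ∈ X, IsDirectlyBelow h E e z}
  let above := {e ∈ E | ∃ z ∈ X, IsDirectlyBelow (-h) E e z}
  let preceding := {e ∈ E | ∃ f ∈ above, IsNextSteeper h E e f}
  have hcover : E ⊆ steepest ∪ (below ∪ preceding) := by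
    intro e he
    simp only [steepest, below, preceding, above, mem_union, mem_filter, he, true_and]
    by_cases hsteepest : ∀ f, ¬ IsNextSteeper h E e f
    · exact .inl hsteepest
    obtain ⟨f, hef⟩ := not_forall_not.1 hsteepest
    exact .inr ((exists_isDirectlyBelow_or_neg hG hE he hef).imp_right fun hz ↦
      ⟨f, ⟨hef.1, hz⟩, hef⟩)
  have hsteepest : #steepest ≤ #X := card_steepest_le hG
  have hbelow : #below ≤ #X :=
    card_le_of_isDirectlyBelow hE (filter_subset _ _) fun e he ↦ (mem_filter.1 he).2
  have habove : #above ≤ #X :=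
    card_le_of_isDirectlyBelow hE.neg (filter_subset _ _) fun e he ↦ (mem_filter.1 he).2
  have hpreceding : #preceding ≤ #above := by
    refine card_le_card_of_forall_subsingleton (IsNextSteeper h E) ?_ ?_
    · exact fun e he ↦ (mem_filter.1 he).2
    · intro f _ e he e' he'
      exact he.2.left_unique hG (mem_filter.1 he.1).1 (mem_filter.1 he'.1).1 he'.2
  have := card_union_le steepest (below ∪ preceding)
  have := card_union_le below preceding
  have := card_le_card hcover
  lia

lemma card_le_three_mul_card_add_card_crossings (hG : IsGeometricGraph X h E) :
    #E ≤ 3 * #X + #(crossings h E) := by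
  let crossed := (crossings h E).image Prod.fst
  have hE : IsNoncrossing h (E \ crossed) := by
    intro e he f hf hne hc
    obtain ⟨he, he'⟩ := mem_sdiff.1 he
    exact he' (mem_image_of_mem Prod.fst (mem_crossings.2 ⟨he, (mem_sdiff.1 hf).1, hne, hc⟩))
  have hrest := card_le_three_mul_card (hG.mono sdiff_subset) hE
  have hcrossed : #crossed ≤ #(crossings h E) := card_image_le
  have := le_card_sdiff crossed E
  lia

/-- Averaging the previous bound over a random set of vertices: a vertex survives with
probability `p`, an edge with probability `p ^ 2` and a crossing with probability `p ^ 4`. -/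
lemma card_mul_sq_le (hG : IsGeometricGraph X h E) {p : K} (hp₀ : 0 ≤ p) (hp₁ : p ≤ 1) :
    #E * p ^ 2 ≤ 3 * (#X * p) + #(crossings h E) * p ^ 4 := by
  rw [← sum_bernoulliWeight_mul_card (X := X) (I := E) (A := fun e ↦ {e.1, e.2}),
    ← pow_one p,
    ← sum_bernoulliWeight_mul_card (X := X) (I := X) (A := fun z ↦ {z}), pow_one p,
    ← sum_bernoulliWeight_mul_card (X := X) (I := crossings h E)
      (A := fun c ↦ {c.1.1, c.1.2, c.2.1, c.2.2}), mul_sum, ← sum_add_distrib]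
  · refine sum_le_sum fun T hT ↦ ?_
    have hTX := mem_powerset.1 hT
    have hsample := card_le_three_mul_card_add_card_crossings (hG.induce hTX)
    rw [crossings_induce] at hsample
    have hX : {z ∈ X | {z} ⊆ T} = T := by
      ext z
      simpa using fun hz ↦ hTX hz
    rw [hX]
    have hsample : (#{e ∈ E | {e.1, e.2} ⊆ T} : K) ≤ 3 * #T +
      #{c ∈ crossings h E | {c.1.1, c.1.2, c.2.1, c.2.2} ⊆ T} := mod_cast hsample
    linear_combination mul_le_mul_of_nonneg_left hsample (bernoulliWeight_nonneg X hp₀ hp₁ T)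
  · rintro ⟨e, f⟩ hc
    obtain ⟨he, hf, -⟩ := mem_crossings.1 hc
    simp [insert_subset_iff, hG.fst_mem e he, hG.snd_mem e he, hG.fst_mem f hf, hG.snd_mem f hf]
  · rintro ⟨e, f⟩ hc
    obtain ⟨he, hf, hne, hcross⟩ := mem_crossings.1 hc
    exact hG.card_ends_of_crosses he hf hne hcross
  · simp
  · simp
  · intro e he
    simp [insert_subset_iff, hG.fst_mem e he, hG.snd_mem e he]
  · exact fun e he ↦ card_pair (hG.fst_lt_snd e he).ne

/-- The survival probability `6 #X / #E` balances the terms of the averaged bound. -/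
theorem crossing_lemma (hG : IsGeometricGraph X h E) (hE : 6 * #X ≤ #E) :
    #E ^ 3 ≤ 72 * #X ^ 2 * #(crossings h E) := by
  rcases X.eq_empty_or_nonempty with rfl | hX
  · simp [eq_empty_of_forall_notMem fun e he ↦ by simpa using hG.fst_mem e he]
  have hX : (0 : K) < #X := mod_cast hX.card_pos
  have hE : 6 * (#X : K) ≤ #E := mod_cast hE
  have hE₀ : (0 : K) < #E := by linarith
  have key := card_mul_sq_le hG (p := 6 * #X / #E) (by positivity) ((div_le_one hE₀).2 hE)
  field_simp at key
  have : (#E : K) ^ 3 ≤ 72 * #X ^ 2 * #(crossings h E) := by linarith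
  exact_mod_cast this

end GeometricGraph

section RichLines

variable {K : Type*} [Field K] [LinearOrder K] {X : Finset K} {h : K → K} {e : K × K}
  {L : Finset (K →ᵃ[K] K)} {j : ℕ}

/-- The abscissae of the points of the graph of `h` over `X` that lie on the line `l`. -/
def verticesOn (X : Finset K) (h : K → K) (l : K →ᵃ[K] K) : Finset K :=
  {z ∈ X | h z = l z}

/-- The segments into which the points of the graph of `h` over `X` divide the lines of `L`. -/
def segments (X : Finset K) (h : K → K) (L : Finset (K →ᵃ[K] K)) : Finset (K × K) :=
  L.biUnion fun l ↦ consecutivePairs (verticesOn X h l)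

lemma chord_eq_of_mem_consecutivePairs {l : K →ᵃ[K] K}
    (he : e ∈ consecutivePairs (verticesOn X h l)) : chord h e = l := by
  obtain ⟨hfst, hsnd, hlt, -⟩ := mem_consecutivePairs.1 he
  exact (eq_chord hlt.ne (mem_filter.1 hfst).2 (mem_filter.1 hsnd).2).symm

lemma chord_mem_of_mem_segments (he : e ∈ segments X h L) : chord h e ∈ L := by
  obtain ⟨l, hl, he⟩ := mem_biUnion.1 he
  rwa [chord_eq_of_mem_consecutivePairs he]

lemma isGeometricGraph_segments (X : Finset K) (h : K → K) (L : Finset (K →ᵃ[K] K)) :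
    IsGeometricGraph X h (segments X h L) := by
  have mem_line {e} (he : e ∈ segments X h L) :
      ∃ l, e ∈ consecutivePairs (verticesOn X h l) := by
    obtain ⟨l, -, he⟩ := mem_biUnion.1 he
    exact ⟨l, he⟩
  refine ⟨fun e he ↦ ?_, fun e he ↦ ?_, fun e he ↦ ?_, fun e he z hz hmem heq ↦ ?_⟩ <;>
    obtain ⟨l, hel⟩ := mem_line he <;>
    obtain ⟨hfst, hsnd, hlt, hmin⟩ := mem_consecutivePairs.1 hel
  · exact (mem_filter.1 hfst).1
  · exact (mem_filter.1 hsnd).1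
  · exact hlt
  · rw [chord_eq_of_mem_consecutivePairs hel] at heq
    exact (hmin z (mem_filter.2 ⟨hz, heq⟩) hmem.1).not_gt hmem.2

lemma card_mul_le_card_segments (hL : ∀ l ∈ L, j < #(verticesOn X h l)) :
    #L * j ≤ #(segments X h L) := by
  rw [segments, card_biUnion, ← smul_eq_mul]
  · exact card_nsmul_le_sum _ _ _ fun l hl ↦
      (Nat.le_sub_one_of_lt (hL l hl)).trans (card_sub_one_le_card_consecutivePairs _)
  · intro l _ m _ hlm
    refine disjoint_left.2 fun e hel hem ↦ hlm ?_
    rw [← chord_eq_of_mem_consecutivePairs hel, chord_eq_of_mem_consecutivePairs hem]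

/-- Székely's argument: apply the crossing lemma to the segments of the rich lines. -/
lemma card_mul_pow_three_le_of_lt_card_verticesOn [IsStrictOrderedRing K]
    (hL : ∀ l ∈ L, j < #(verticesOn X h l)) :
    #L * j ^ 3 ≤ 72 * #X ^ 2 + 6 * #X * j ^ 2 := by
  have hsegments := card_mul_le_card_segments hL
  rcases le_or_gt (6 * #X) #(segments X h L) with hmany | hfew
  · have hG := isGeometricGraph_segments X h L
    have hcrossings := hG.card_crossings_le fun e he ↦ chord_mem_of_mem_segments he
    rcases L.eq_empty_or_nonempty with rfl | hne
    · simp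
    refine le_add_right (Nat.le_of_mul_le_mul_left ?_ (pow_pos hne.card_pos 2))
    calc #L ^ 2 * (#L * j ^ 3) = (#L * j) ^ 3 := by ring
      _ ≤ #(segments X h L) ^ 3 := by gcongr
      _ ≤ 72 * #X ^ 2 * #(crossings h (segments X h L)) := crossing_lemma hG hmany
      _ ≤ 72 * #X ^ 2 * #L ^ 2 := by gcongr
      _ = #L ^ 2 * (72 * #X ^ 2) := by ring
  · calc #L * j ^ 3 = #L * j * j ^ 2 := by ring
      _ ≤ 6 * #X * j ^ 2 := Nat.mul_le_mul_right _ (hsegments.trans hfew.le)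
      _ ≤ 72 * #X ^ 2 + 6 * #X * j ^ 2 := Nat.le_add_left _ _

end RichLines

section SpannedLines

variable (K : Type*) {V P : Type*} [DivisionRing K] [AddCommGroup V] [Module K V] [AddTorsor V P]

open scoped Classical in
/-- The lines through at least two points of `S`. -/
noncomputable def spannedLines (S : Finset P) : Finset (AffineSubspace K P) :=
  S.offDiag.image fun e ↦ line[K, e.1, e.2]

open scoped Classical in
/-- The lines joining a point of `A` to a point of `Q`; a point in both contributes itself. -/
noncomputable def joiningLines (A Q : Finset P) : Finset (AffineSubspace K P) :=
  (A ×ˢ Q).image fun e ↦ line[K, e.1, e.2]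

variable {K}

open scoped Classical in
/-- The points of `S` on `l`. -/
noncomputable def pointsOn (S : Finset P) (l : AffineSubspace K P) : Finset P :=
  {p ∈ S | p ∈ l}

variable {S A Q : Finset P} {l : AffineSubspace K P} {p q : P}

lemma mem_pointsOn : p ∈ pointsOn S l ↔ p ∈ S ∧ p ∈ l := by
  simp only [pointsOn, mem_filter]

lemma pointsOn_subset : pointsOn S l ⊆ S := fun _ hp ↦ (mem_pointsOn.1 hp).1

lemma mem_spannedLines : l ∈ spannedLines K S ↔ ∃ p ∈ S, ∃ q ∈ S, p ≠ q ∧ line[K, p, q] = l := by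
  simp only [spannedLines, mem_image, mem_offDiag, Prod.exists]
  grind

lemma mem_joiningLines : l ∈ joiningLines K A Q ↔ ∃ p ∈ A, ∃ q ∈ Q, line[K, p, q] = l := by
  simp only [joiningLines, mem_image, mem_product, Prod.exists]
  grind

lemma line_eq_of_mem_spannedLines (hl : l ∈ spannedLines K S) (hp : p ∈ l) (hq : q ∈ l)
    (hpq : p ≠ q) : line[K, p, q] = l := by
  obtain ⟨a, -, b, -, -, rfl⟩ := mem_spannedLines.1 hl
  exact affineSpan_pair_eq_of_mem_of_mem_of_ne hp hq hpq

lemma finrank_direction_line (hpq : p ≠ q) : Module.finrank K line[K, p, q].direction = 1 := by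
  rw [direction_affineSpan, vectorSpan_pair]
  exact finrank_span_singleton (vsub_ne_zero.2 hpq)

lemma line_eq_of_finrank_eq_one (hl : Module.finrank K l.direction = 1) (hp : p ∈ l) (hq : q ∈ l)
    (hpq : p ≠ q) : line[K, p, q] = l := by
  have : FiniteDimensional K l.direction := Module.finite_of_finrank_eq_succ hl
  have hle := affineSpan_pair_le_of_mem_of_mem hp hq
  refine AffineSubspace.eq_of_direction_eq_of_nonempty_of_le ?_
    ⟨p, left_mem_affineSpan_pair K p q⟩ hle
  exact Submodule.eq_of_le_of_finrank_eq (AffineSubspace.direction_le hle)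
    ((finrank_direction_line hpq).trans hl.symm)

variable (K) in
lemma coe_spannedLines (S : Finset P) : (spannedLines K S : Set (AffineSubspace K P)) =
    {l | Module.finrank K l.direction = 1 ∧ ∃ p ∈ S, ∃ q ∈ S, p ≠ q ∧ p ∈ l ∧ q ∈ l} := by
  ext l
  rw [mem_coe, mem_spannedLines]
  constructor
  · rintro ⟨p, hp, q, hq, hpq, rfl⟩
    exact ⟨finrank_direction_line hpq, p, hp, q, hq, hpq, left_mem_affineSpan_pair K p q,
      right_mem_affineSpan_pair K p q⟩
  · rintro ⟨hl, p, hp, q, hq, hpq, hpl, hql⟩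
    exact ⟨p, hp, q, hq, hpq, line_eq_of_finrank_eq_one hl hpl hql hpq⟩

lemma coe_pointsOn : (pointsOn S l : Set P) = (S : Set P) ∩ l := by
  ext p
  rw [mem_coe, mem_pointsOn, Set.mem_inter_iff, mem_coe, SetLike.mem_coe]

lemma one_lt_card_pointsOn (hl : l ∈ spannedLines K S) : 1 < #(pointsOn S l) := by
  obtain ⟨p, hp, q, hq, hpq, rfl⟩ := mem_spannedLines.1 hl
  exact one_lt_card.2 ⟨p, mem_pointsOn.2 ⟨hp, left_mem_affineSpan_pair K p q⟩,
    q, mem_pointsOn.2 ⟨hq, right_mem_affineSpan_pair K p q⟩, hpq⟩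

lemma add_card_pointsOn_le {x : ℕ} (hp : p ∈ S) (hpl : p ∈ l)
    (hl : ((S : Set P) ∩ l).ncard ≤ #S - x) : x + #(pointsOn S l) ≤ #S := by
  rw [← coe_pointsOn, Set.ncard_coe_finset] at hl
  have := card_pos.2 ⟨p, mem_pointsOn.2 ⟨hp, hpl⟩⟩
  lia

variable (K) in
lemma sum_card_offDiag_pointsOn (S : Finset P) :
    ∑ l ∈ spannedLines K S, #(pointsOn S l).offDiag = #S.offDiag := by
  classical
  rw [card_eq_sum_card_fiberwise (f := fun e ↦ line[K, e.1, e.2]) (t := spannedLines K S)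
    fun e he ↦ mem_image_of_mem _ he]
  refine sum_congr rfl fun l hl ↦ congrArg card ?_
  ext ⟨p, q⟩
  simp only [mem_offDiag, mem_pointsOn, mem_filter]
  constructor
  · rintro ⟨⟨hp, hpl⟩, ⟨hq, hql⟩, hpq⟩
    exact ⟨⟨hp, hq, hpq⟩, line_eq_of_mem_spannedLines hl hpl hql hpq⟩
  · rintro ⟨⟨hp, hq, hpq⟩, rfl⟩
    exact ⟨⟨hp, left_mem_affineSpan_pair K p q⟩, ⟨hq, right_mem_affineSpan_pair K p q⟩, hpq⟩

lemma joiningLines_subset_spannedLines (hA : A ⊆ S) (hQ : Q ⊆ S) (hAQ : Disjoint A Q) :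
    joiningLines K A Q ⊆ spannedLines K S := by
  intro l hl
  obtain ⟨p, hp, q, hq, rfl⟩ := mem_joiningLines.1 hl
  exact mem_spannedLines.2 ⟨p, hA hp, q, hQ hq, hAQ.forall_ne_finset hp hq, rfl⟩

lemma card_joiningLines_singleton (hA : ∀ p ∈ A, p ∈ l) (hq : q ∉ l) :
    #(joiningLines K A {q}) = #A := by
  classical
  rw [joiningLines, product_singleton, map_eq_image, image_image]
  refine card_image_of_injOn fun p hp p' hp' heq ↦ ?_
  have heq : line[K, p, q] = line[K, p', q] := heq
  by_contra hne
  have hp'_mem : p' ∈ line[K, p, q] := heq ▸ left_mem_affineSpan_pair K p' q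
  have hpp' : line[K, p, p'] = line[K, p, q] :=
    affineSpan_pair_eq_of_right_mem_of_ne hp'_mem (Ne.symm hne)
  have hq_mem : q ∈ line[K, p, p'] := hpp' ▸ right_mem_affineSpan_pair K p q
  exact hq (affineSpan_pair_le_of_mem_of_mem (hA p hp) (hA p' hp') hq_mem)

/-- The lines from a new point `q` to `A` are distinct, and one of them can only have been counted
before if it joins `q` to a point of `Q`. -/
lemma card_mul_card_sub_card_le (hA : ∀ p ∈ A, p ∈ l) (hQ : ∀ q ∈ Q, q ∉ l) :
    #Q * (#A - #Q) ≤ #(joiningLines K A Q) := by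
  classical
  induction Q using Finset.induction_on with
  | empty => simp
  | insert q Q hq ih =>
    rw [forall_mem_insert] at hQ
    have hold : joiningLines K A Q ∩ joiningLines K A {q} ⊆ Q.image fun r ↦ line[K, q, r] := by
      intro m hm
      obtain ⟨hmQ, hmq⟩ := mem_inter.1 hm
      obtain ⟨p, -, r, hr, rfl⟩ := mem_joiningLines.1 hmQ
      obtain ⟨p', -, q', hq', heq⟩ := mem_joiningLines.1 hmq
      rw [mem_singleton.1 hq'] at heq
      exact mem_image.2 ⟨r, hr, affineSpan_pair_eq_of_mem_of_mem_of_ne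
        (heq ▸ right_mem_affineSpan_pair K p' q) (right_mem_affineSpan_pair K p r)
        (ne_of_mem_of_not_mem hr hq).symm⟩
    have hunion : joiningLines K A (insert q Q) = joiningLines K A Q ∪ joiningLines K A {q} := by
      rw [insert_eq, union_comm, joiningLines, product_union, image_union]
      rfl
    have hold_card := (card_le_card hold).trans card_image_le
    have hnew_card := card_joiningLines_singleton hA hQ.1
    have hinclusion_exclusion :=
      card_union_add_card_inter (joiningLines K A Q) (joiningLines K A {q})
    have hmono : (#Q + 1) * (#A - (#Q + 1)) ≤ #Q * (#A - #Q) + (#A - #Q) := by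
      rw [← Nat.succ_mul]
      exact Nat.mul_le_mul_left _ (Nat.sub_le_sub_left (Nat.le_succ _) _)
    have := ih hQ.2
    rw [card_insert_of_notMem hq, hunion]
    lia

/-- Joining about `min x k / 2` points off a line to the `k` points on it gives enough lines. -/
lemma mul_card_le_of_card_le_mul_card_pointsOn {S : Finset P} {l : AffineSubspace K P} {x m : ℕ}
    (hl : 2 ≤ #(pointsOn S l)) (hx : x + #(pointsOn S l) ≤ #S) (hm : #S ≤ m * #(pointsOn S l)) :
    x * #S ≤ 8 * m ^ 2 * #(spannedLines K S) := by
  classical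
  set k := #(pointsOn S l) with hk
  let z := (min x k + 1) / 2
  have hoff : z ≤ #(S \ pointsOn S l) := by
    rw [card_sdiff_of_subset pointsOn_subset]
    lia
  obtain ⟨Q, hQ, hQz⟩ := exists_subset_card_eq hoff
  have hlines : z * (k - z) ≤ #(spannedLines K S) := by
    rw [← hQz, hk]
    refine (card_mul_card_sub_card_le (fun p hp ↦ (mem_pointsOn.1 hp).2) fun q hq hql ↦ ?_).trans
      (card_le_card (joiningLines_subset_spannedLines pointsOn_subset (hQ.trans sdiff_subset)
        (disjoint_sdiff.mono_right hQ)))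
    obtain ⟨hqS, hq'⟩ := mem_sdiff.1 (hQ hq)
    exact hq' (mem_pointsOn.2 ⟨hqS, hql⟩)
  have hx_le : x ≤ m * min x k := by
    have hm₀ : 1 ≤ m := by
      by_contra! hm₀
      simp only [Nat.lt_one_iff.1 hm₀, zero_mul] at hm
      lia
    rw [← Nat.mul_min_mul_left]
    exact le_min (Nat.le_mul_of_pos_left x hm₀) (by lia)
  calc x * #S ≤ (m * min x k) * (m * k) := Nat.mul_le_mul hx_le hm
    _ ≤ (m * (2 * z)) * (m * (4 * (k - z))) := by gcongr <;> lia
    _ = 8 * m ^ 2 * (z * (k - z)) := by ring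
    _ ≤ 8 * m ^ 2 * #(spannedLines K S) := by gcongr

end SpannedLines

section GenericProjection

variable {K V P : Type*} [Field K] [AddCommGroup V] [Module K V] [AddTorsor V P]

lemma exists_dual_ker_disjoint [Infinite K] (W : Finset V) :
    ∃ φ : Module.Dual K V, ∀ w ∈ W, φ w = 0 → w = 0 := by
  obtain ⟨φ, hφ⟩ := Module.exists_dual_forall_apply_ne_zero (K := K)
    (fun w : {w : W // (w : V) ≠ 0} ↦ (w : V)) fun w ↦ w.2
  exact ⟨φ, fun w hw ↦ not_imp_not.1 fun hne ↦ hφ ⟨⟨w, hw⟩, hne⟩⟩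

lemma smul_vsub_sub_smul_vsub_eq_zero_iff_mem_line {φ : Module.Dual K V} {p q r : P}
    (hpq : φ (q -ᵥ p) ≠ 0) :
    φ (q -ᵥ p) • (r -ᵥ p) - φ (r -ᵥ p) • (q -ᵥ p) = 0 ↔ r ∈ line[K, p, q] := by
  rw [sub_eq_zero, ← vsub_vadd r p, vadd_left_mem_affineSpan_pair, vsub_vadd]
  constructor
  · exact fun h ↦ ⟨φ (r -ᵥ p) / φ (q -ᵥ p), by
      rw [div_eq_inv_mul, mul_smul, ← h, inv_smul_smul₀ hpq]⟩
  · rintro ⟨c, hc⟩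
    rw [← hc, map_smul, smul_smul, smul_eq_mul, mul_comm]

/-- A generic affine map to the coordinate plane turns the points of `S` into the graph of a
function, without creating incidences with the lines they span. -/
lemma exists_graph_model [Infinite K] (S : Finset P) :
    ∃ (f : P → K) (h : K → K), Set.InjOn f S ∧ ∀ p ∈ S, ∀ q ∈ S, ∀ r ∈ S, p ≠ q →
      (h (f r) = chord h (f p, f q) (f r) ↔ r ∈ line[K, p, q]) := by
  classical
  obtain ⟨o⟩ : Nonempty P := inferInstance
  obtain ⟨φ, hφ⟩ := exists_dual_ker_disjoint (K := K) ((S ×ˢ S).image fun e ↦ e.2 -ᵥ e.1)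
  obtain ⟨ψ, hψ⟩ := exists_dual_ker_disjoint (K := K) ((S ×ˢ S ×ˢ S).image fun e ↦
    φ (e.2.1 -ᵥ e.1) • (e.2.2 -ᵥ e.1) - φ (e.2.2 -ᵥ e.1) • (e.2.1 -ᵥ e.1))
  simp only [mem_image, mem_product, Prod.exists, forall_exists_index, and_imp] at hφ hψ
  have vsub_ne_zero {p q} (hp : p ∈ S) (hq : q ∈ S) (hpq : p ≠ q) : φ (q -ᵥ p) ≠ 0 :=
    fun h ↦ hpq (vsub_eq_zero_iff_eq.1 (hφ _ p q hp hq rfl h)).symm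
  let f (p : P) := φ (p -ᵥ o)
  have hf : Set.InjOn f S := by
    intro p hp q hq hpq
    by_contra hne
    refine vsub_ne_zero hp hq hne ?_
    rw [← vsub_sub_vsub_cancel_right q p o, map_sub, sub_eq_zero]
    exact hpq.symm
  refine ⟨f, fun t ↦ ψ (Function.invFunOn f S t -ᵥ o), hf, fun p hp q hq r hr hpq ↦ ?_⟩
  have hφqp := vsub_ne_zero hp hq hpq
  have hline : ψ (φ (q -ᵥ p) • (r -ᵥ p) - φ (r -ᵥ p) • (q -ᵥ p)) = 0 ↔ r ∈ line[K, p, q] := by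
    rw [← smul_vsub_sub_smul_vsub_eq_zero_iff_mem_line hφqp]
    exact ⟨hψ _ p q r hp hq hr rfl, fun h ↦ by rw [h, map_zero]⟩
  rw [← hline, chord_apply, slope_def_field]
  simp only [hf.leftInvOn_invFunOn (mem_coe.2 hp), hf.leftInvOn_invFunOn (mem_coe.2 hq),
    hf.leftInvOn_invFunOn (mem_coe.2 hr), f, ← map_sub, vsub_sub_vsub_cancel_right]
  rw [← sub_eq_iff_eq_add', ← map_sub, vsub_sub_vsub_cancel_right, map_sub, map_smul, map_smul,
    smul_eq_mul, smul_eq_mul, sub_eq_zero, div_mul_eq_mul_div, eq_div_iff hφqp, mul_comm,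
    mul_comm (ψ (q -ᵥ p))]

lemma card_rich_mul_pow_three_le [LinearOrder K] [IsStrictOrderedRing K] (S : Finset P) (j : ℕ) :
    #{l ∈ spannedLines K S | j < #(pointsOn S l)} * j ^ 3 ≤ 72 * #S ^ 2 + 6 * #S * j ^ 2 := by
  classical
  obtain ⟨f, h, hf, hfh⟩ := exists_graph_model (K := K) S
  have exists_model (l) (hl : l ∈ spannedLines K S) :
      ∃ m : K →ᵃ[K] K, ∀ r ∈ S, h (f r) = m (f r) ↔ r ∈ l := by
    obtain ⟨p, hp, q, hq, hpq, rfl⟩ := mem_spannedLines.1 hl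
    exact ⟨chord h (f p, f q), fun r hr ↦ hfh p hp q hq r hr hpq⟩
  choose! m hm using exists_model
  have hm_inj : Set.InjOn m (spannedLines K S) := by
    intro l hl l' hl' heq
    obtain ⟨p, hp, q, hq, hpq, rfl⟩ := mem_spannedLines.1 hl
    have mem_of_mem {r} (hr : r ∈ S) : r ∈ line[K, p, q] → r ∈ l' := fun h ↦ by
      rwa [← hm _ hl' r hr, ← heq, hm _ hl r hr]
    exact line_eq_of_mem_spannedLines hl' (mem_of_mem hp (left_mem_affineSpan_pair K p q))
      (mem_of_mem hq (right_mem_affineSpan_pair K p q)) hpq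
  have hvertices {l} (hl : l ∈ spannedLines K S) :
      verticesOn (S.image f) h (m l) = (pointsOn S l).image f := by
    rw [verticesOn, filter_image, pointsOn]
    exact congrArg (image f) (filter_congr (hm l hl))
  rw [← card_image_of_injOn (hm_inj.mono (coe_subset.2 (filter_subset _ _))),
    ← card_image_of_injOn hf]
  refine card_mul_pow_three_le_of_lt_card_verticesOn (h := h) fun k hk ↦ ?_
  obtain ⟨l, hl, rfl⟩ := mem_image.1 hk
  obtain ⟨hl, hrich⟩ := mem_filter.1 hl
  rwa [hvertices hl, card_image_of_injOn (hf.mono (coe_subset.2 pointsOn_subset))]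

end GenericProjection

lemma sum_mul_sub_one_eq {ι : Type*} (s : Finset ι) (f : ι → ℕ) {M : ℕ} (hM : ∀ i ∈ s, f i ≤ M) :
    ∑ i ∈ s, f i * (f i - 1) = 2 * ∑ j ∈ range M, j * #{i ∈ s | j < f i} := by
  have sum_lt (i) (hi : i ∈ s) : f i * (f i - 1) = 2 * ∑ j ∈ range M, if j < f i then j else 0 := by
    have hrange : {j ∈ range M | j < f i} = range (f i) := by
      ext j
      simp only [mem_filter, mem_range]
      exact ⟨And.right, fun h ↦ ⟨h.trans_le (hM i hi), h⟩⟩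
    rw [← sum_filter, hrange, mul_comm 2, sum_range_id_mul_two]
  rw [sum_congr rfl sum_lt, ← mul_sum, sum_comm]
  refine congrArg (2 * ·) (sum_congr rfl fun j _ ↦ ?_)
  rw [← sum_filter, sum_const, smul_eq_mul, mul_comm]

lemma sum_Ioo_mul_le {N : ℕ → ℕ} {a b : ℕ} (hN : ∀ j, N j * j ^ 3 ≤ a + b * j ^ 2) (J M : ℕ) :
    ∑ j ∈ Ioo J M, (j * N j : ℝ) ≤ 2 * a / (J + 1) + b * M := by
  have hterm {j} (hj : j ∈ Ioo J M) : (j * N j : ℝ) ≤ a * (j ^ 2 : ℝ)⁻¹ + b := by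
    have hj₀ : (0 : ℝ) < j := mod_cast (mem_Ioo.1 hj).1.pos
    have hNj : (N j * j ^ 3 : ℝ) ≤ a + b * j ^ 2 := mod_cast hN j
    field_simp
    linear_combination hNj
  have hcard : (#(Ioo J M) : ℝ) ≤ M := by
    rw [Nat.card_Ioo]
    exact_mod_cast (Nat.sub_le _ _).trans (Nat.sub_le _ _)
  calc ∑ j ∈ Ioo J M, (j * N j : ℝ)
      ≤ ∑ j ∈ Ioo J M, (a * (j ^ 2 : ℝ)⁻¹ + b) := sum_le_sum fun j hj ↦ hterm hj
    _ = a * ∑ j ∈ Ioo J M, (j ^ 2 : ℝ)⁻¹ + b * #(Ioo J M) := by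
        rw [sum_add_distrib, mul_sum, sum_const, nsmul_eq_mul, mul_comm (b : ℝ)]
    _ ≤ a * (2 / (J + 1)) + b * M := by gcongr; exact sum_Ioo_inv_sq_le J M
    _ = 2 * a / (J + 1) + b * M := by ring

lemma sum_range_mul_le {N : ℕ → ℕ} {t a b : ℕ} (ht : ∀ j, N j ≤ t)
    (hN : ∀ j, N j * j ^ 3 ≤ a + b * j ^ 2) (J M : ℕ) :
    ∑ j ∈ range M, (j * N j : ℝ) ≤ J ^ 2 * t + (2 * a / (J + 1) + b * M) := by
  rw [← sum_filter_add_sum_filter_not _ (· ≤ J)]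
  have hhigh : {j ∈ range M | ¬ j ≤ J} = Ioo J M := by
    ext j
    simp [and_comm]
  have hlow : ∑ j ∈ range M with j ≤ J, j * N j ≤ J ^ 2 * t :=
    calc ∑ j ∈ range M with j ≤ J, j * N j
        ≤ ∑ j ∈ range (J + 1), j * t := by
          refine (sum_le_sum fun j _ ↦ Nat.mul_le_mul_left j (ht j)).trans (sum_le_sum_of_subset ?_)
          exact fun j hj ↦ mem_range_succ_iff.2 (mem_filter.1 hj).2
      _ ≤ J ^ 2 * t := by
          rw [← sum_mul]
          have := sum_range_id_mul_two (J + 1)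
          rw [Nat.add_sub_cancel] at this
          gcongr
          nlinarith [Nat.le_self_pow two_ne_zero J]
  rw [hhigh]
  exact add_le_add (mod_cast hlow) (sum_Ioo_mul_le hN J M)

section Dichotomy

variable (K : Type*) {V P : Type*} [Field K] [LinearOrder K] [IsStrictOrderedRing K]
  [AddCommGroup V] [Module K V] [AddTorsor V P]

lemma card_offDiag_le (S : Finset P) {M : ℕ} (hM : ∀ l ∈ spannedLines K S, #(pointsOn S l) ≤ M)
    (J : ℕ) : (#S.offDiag : ℝ) ≤
      2 * (J ^ 2 * #(spannedLines K S) + (2 * (72 * #S ^ 2) / (J + 1) + 6 * #S * M)) := by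
  have hpairs : #S.offDiag =
      2 * ∑ j ∈ range M, j * #{l ∈ spannedLines K S | j < #(pointsOn S l)} := by
    rw [← sum_mul_sub_one_eq _ _ hM, ← sum_card_offDiag_pointsOn K S]
    exact sum_congr rfl fun l _ ↦ by rw [offDiag_card, Nat.mul_sub_one]
  rw [hpairs]
  push_cast
  gcongr
  exact_mod_cast sum_range_mul_le (fun j ↦ card_filter_le _ _) (card_rich_mul_pow_three_le S) J M

/-- With these constants, at most half of the pairs of points lie on lines with more than `2303`
points. -/
lemma sq_card_le_of_forall_card_pointsOn_le (S : Finset P) {M : ℕ} (hS : 2 ≤ #S)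
    (hM : ∀ l ∈ spannedLines K S, #(pointsOn S l) ≤ M) (hMS : 96 * M ≤ #S) :
    #S ^ 2 ≤ 8 * 2304 ^ 2 * #(spannedLines K S) := by
  have hcount := card_offDiag_le K S hM 2303
  rw [offDiag_card, Nat.cast_sub (Nat.le_mul_self _), Nat.cast_mul] at hcount
  norm_num at hcount
  have hS : (2 : ℝ) ≤ #S := mod_cast hS
  have hMS : (96 * M : ℝ) ≤ #S := mod_cast hMS
  have : (#S ^ 2 : ℝ) ≤ 8 * 2304 ^ 2 * #(spannedLines K S) := by nlinarith
  exact_mod_cast this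

lemma mul_card_le_card_spannedLines (S : Finset P) {x : ℕ} (hS : 2 ≤ #S)
    (hx : ∀ l ∈ spannedLines K S, x + #(pointsOn S l) ≤ #S) :
    x * #S ≤ 8 * 2304 ^ 2 * #(spannedLines K S) := by
  by_cases hrich : ∃ l ∈ spannedLines K S, #S ≤ 96 * #(pointsOn S l)
  · obtain ⟨l, hl, hlS⟩ := hrich
    exact (mul_card_le_of_card_le_mul_card_pointsOn (one_lt_card_pointsOn hl) (hx l hl) hlS).trans
      (Nat.mul_le_mul_right _ (by norm_num))
  · push Not at hrich
    obtain ⟨p, hp, q, hq, hpq⟩ := one_lt_card.1 hS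
    have hxS : x ≤ #S :=
      (Nat.le_add_right _ _).trans (hx _ (mem_spannedLines.2 ⟨p, hp, q, hq, hpq, rfl⟩))
    refine (Nat.mul_le_mul_right _ hxS).trans ((sq #S).symm.trans_le ?_)
    exact sq_card_le_of_forall_card_pointsOn_le K S hS
      (fun l hl ↦ by have := hrich l hl; lia) (Nat.mul_div_le _ _)

end Dichotomy

end ErdosBeck

open ErdosBeck in
theorem erdos_beck_general {K V P : Type*} [Field K] [LinearOrder K] [IsStrictOrderedRing K]
    [AddCommGroup V] [Module K V] [Nontrivial V] [AddTorsor V P] (S : Finset P) (x : ℕ)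
    (hS : ∀ l : AffineSubspace K P, Module.finrank K l.direction = 1 →
      ((S : Set P) ∩ l).ncard ≤ S.card - x) :
    x * S.card ≤ 8 * 2304 ^ 2 * {l : AffineSubspace K P | Module.finrank K l.direction = 1 ∧
      ∃ p ∈ S, ∃ q ∈ S, p ≠ q ∧ p ∈ l ∧ q ∈ l}.ncard := by
  have hx {p q} (hp : p ∈ S) (hpq : p ≠ q) : x + (pointsOn S line[K, p, q]).card ≤ S.card :=
    add_card_pointsOn_le hp (left_mem_affineSpan_pair K p q) (hS _ (finrank_direction_line hpq))
  rw [← coe_spannedLines, Set.ncard_coe_finset]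
  rcases le_or_gt 2 S.card with hlarge | hsmall
  · refine mul_card_le_card_spannedLines K S hlarge fun l hl ↦ ?_
    obtain ⟨p, hp, q, -, hpq, rfl⟩ := mem_spannedLines.1 hl
    exact hx hp hpq
  · rcases S.eq_empty_or_nonempty with rfl | ⟨p, hp⟩
    · simp
    obtain ⟨v, hv⟩ := exists_ne (0 : V)
    have hxp := hx hp (q := v +ᵥ p) fun h ↦
      hv (vadd_right_cancel p (by rw [← h, zero_vadd]))
    have := Finset.card_pos.2 ⟨p, mem_pointsOn.2 ⟨hp, left_mem_affineSpan_pair K p (v +ᵥ p)⟩⟩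
    simp [show x = 0 by lia]

/-- Erdős–Beck theorem: there is an absolute constant `c > 0` such that any
set `S` of `n` points in the plane with at most `n − x` collinear spans at least `c·x·n`
lines. -/
theorem erdos_beck : ∃ c : ℝ, 0 < c ∧
    ∀ (n x : ℕ) (S : Finset (Fin 2 → ℝ)), S.card = n →
      (∀ l : AffineSubspace ℝ (Fin 2 → ℝ), Module.finrank ℝ l.direction = 1 →
        ((↑S : Set (Fin 2 → ℝ)) ∩ ↑l).ncard ≤ n - x) →
      ({l : AffineSubspace ℝ (Fin 2 → ℝ) |
          Module.finrank ℝ l.direction = 1 ∧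
          ∃ p₁ ∈ S, ∃ p₂ ∈ S, p₁ ≠ p₂ ∧ p₁ ∈ l ∧ p₂ ∈ l}.ncard : ℝ) ≥ c * x * n := by
  refine ⟨(8 * 2304 ^ 2)⁻¹, by positivity, fun n x S hn hS ↦ ?_⟩
  subst hn
  rw [ge_iff_le, mul_assoc, inv_mul_le_iff₀ (by norm_num)]
  exact_mod_cast erdos_beck_general S x hS
end

section
/- For each β ∈ (0,1) there exists γ > 0 such that for any set S of n points in the plane, either some line contains at least βn points of S, or the number of lines spanned by S exceeds γn². -/
/-!
Let `S` be a set of `n` points. If a line contains `k` of them, where `k` is proportional to `n`,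
then joining these to the other `n - k` points and applying Cauchy–Schwarz yields at least
`(n - k) * k ^ 2 / n` lines. If every line contains only a small proportion of `S`, project `S`
generically to the plane and cut it by a ham sandwich argument into four quadrants `S_i` of about
`n / 4` points. A line misses one quadrant, so it satisfies `|S ∩ l| ^ 2 ≤ 3 * ∑ i, |S_i ∩ l| ^ 2`.
Two points lie on exactly one line; summing over the set `L` of spanned lines therefore gives
`n ^ 2 - n ≤ 3 * (∑ i, |S_i| ^ 2 + I)`, where `I` is the number of incidences. The first sum is only
about `n ^ 2 / 4`, so `I` is of order `n ^ 2`, and `I ^ 2 ≤ 2 * |L| * n ^ 2` bounds `|L|` below. No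
incidence theorem of Szemerédi–Trotter type is needed.
-/

section Counting

open Module Finset
open scoped Affine

variable {k V P : Type*} [DivisionRing k] [AddCommGroup V] [Module k V] [AddTorsor V P]

theorem finrank_direction_line {p q : P} (hpq : p ≠ q) :
    finrank k line[k, p, q].direction = 1 := by
  rw [direction_affineSpan, vectorSpan_pair]
  exact finrank_span_singleton (vsub_ne_zero.2 hpq)

theorem collinear_of_finrank_direction_eq_one {l : AffineSubspace k P}
    (hl : finrank k l.direction = 1) : Collinear k (l : Set P) :=
  (rank_eq_one_iff_finrank_eq_one.2 hl).le

theorem line_eq_of_mem_of_mem {l : AffineSubspace k P} (hl : finrank k l.direction = 1) {p q : P}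
    (hpq : p ≠ q) (hp : p ∈ l) (hq : q ∈ l) : line[k, p, q] = l := by
  rw [(collinear_of_finrank_direction_eq_one hl).affineSpan_eq_of_ne hp hq hpq,
    AffineSubspace.affineSpan_coe]

theorem exists_line_superset_of_collinear [Nontrivial V] {s : Set P} (hs : Collinear k s) :
    ∃ l : AffineSubspace k P, finrank k l.direction = 1 ∧ s ⊆ l := by
  obtain ⟨p₀, v, hv⟩ := (collinear_iff_exists_forall_eq_smul_vadd s).1 hs
  obtain ⟨w, hw, hvw⟩ : ∃ w : V, w ≠ 0 ∧ v ∈ k ∙ w := by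
    by_cases hv0 : v = 0
    · obtain ⟨w, hw⟩ := exists_ne (0 : V)
      exact ⟨w, hw, hv0 ▸ zero_mem _⟩
    · exact ⟨v, hv0, Submodule.mem_span_singleton_self v⟩
  refine ⟨.mk' p₀ (k ∙ w), ?_, fun p hp ↦ ?_⟩
  · rw [AffineSubspace.direction_mk', finrank_span_singleton hw]
  · obtain ⟨r, rfl⟩ := hv p hp
    exact AffineSubspace.vadd_mem_mk' _ (Submodule.smul_mem _ r hvw)

open Classical in
variable (k) in
/-- The finite set of lines spanned by `S`, that is, passing through two distinct points of `S`. -/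
noncomputable def spannedLines (S : Finset P) : Finset (AffineSubspace k P) :=
  S.offDiag.image fun z ↦ line[k, z.1, z.2]

open Classical in
/-- The points of `S` lying on the line (or on any other affine subspace) `l`. -/
noncomputable def pointsOn (S : Finset P) (l : AffineSubspace k P) : Finset P :=
  {p ∈ S | p ∈ l}

theorem mem_spannedLines {S : Finset P} {l : AffineSubspace k P} :
    l ∈ spannedLines k S ↔
      finrank k l.direction = 1 ∧ ∃ p ∈ S, ∃ q ∈ S, p ≠ q ∧ p ∈ l ∧ q ∈ l := by
  simp only [spannedLines, mem_image, mem_offDiag, Prod.exists]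
  constructor
  · rintro ⟨p, q, ⟨hp, hq, hpq⟩, rfl⟩
    exact ⟨finrank_direction_line hpq, p, hp, q, hq, hpq, left_mem_affineSpan_pair k p q,
      right_mem_affineSpan_pair k p q⟩
  · rintro ⟨hl, p, hp, q, hq, hpq, hpl, hql⟩
    exact ⟨p, q, ⟨hp, hq, hpq⟩, line_eq_of_mem_of_mem hl hpq hpl hql⟩

theorem mem_pointsOn {S : Finset P} {l : AffineSubspace k P} {p : P} :
    p ∈ pointsOn S l ↔ p ∈ S ∧ p ∈ l := by
  simp only [pointsOn, mem_filter]

theorem pointsOn_subset (S : Finset P) (l : AffineSubspace k P) : pointsOn S l ⊆ S :=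
  fun _ hp ↦ (mem_pointsOn.1 hp).1

open Classical in
variable (k) in
theorem card_eq_sum_spannedLines {S : Finset P} {T : Finset (P × P)} (hT : T ⊆ S.offDiag) :
    #T = ∑ l ∈ spannedLines k S, #{z ∈ T | z.1 ∈ l ∧ z.2 ∈ l} := by
  rw [card_eq_sum_card_fiberwise (f := fun z ↦ line[k, z.1, z.2])
    fun z hz ↦ mem_image_of_mem (fun z : P × P ↦ line[k, z.1, z.2]) (hT hz)]
  refine sum_congr rfl fun l hl ↦ congrArg card (filter_congr fun z hz ↦ ⟨?_, fun ⟨h₁, h₂⟩ ↦ ?_⟩)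
  · rintro rfl
    exact ⟨left_mem_affineSpan_pair k z.1 z.2, right_mem_affineSpan_pair k z.1 z.2⟩
  · exact line_eq_of_mem_of_mem (mem_spannedLines.1 hl).1 (mem_offDiag.1 (hT hz)).2.2 h₁ h₂

variable (k) in
theorem card_offDiag_eq_sum_spannedLines {S Q : Finset P} (hQ : Q ⊆ S) :
    #Q.offDiag = ∑ l ∈ spannedLines k S, #(pointsOn Q l).offDiag := by
  rw [card_eq_sum_spannedLines k (offDiag_mono hQ)]
  refine sum_congr rfl fun l _ ↦ congrArg card ?_
  ext z
  simp only [mem_filter, mem_offDiag, mem_pointsOn]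
  tauto

variable (k) in
theorem card_mul_card_eq_sum_spannedLines {S A B : Finset P} (hA : A ⊆ S) (hB : B ⊆ S)
    (hAB : Disjoint A B) :
    #A * #B = ∑ l ∈ spannedLines k S, #(pointsOn A l) * #(pointsOn B l) := by
  have hsub : A ×ˢ B ⊆ S.offDiag := fun z hz ↦ by
    obtain ⟨h₁, h₂⟩ := mem_product.1 hz
    exact mem_offDiag.2 ⟨hA h₁, hB h₂, disjoint_iff_ne.1 hAB _ h₁ _ h₂⟩
  rw [← card_product, card_eq_sum_spannedLines k hsub]
  refine sum_congr rfl fun l _ ↦ ?_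
  rw [← card_product]
  congr 1
  ext z
  simp only [mem_filter, mem_product, mem_pointsOn]
  tauto

theorem sq_card_eq_card_offDiag_add_card {α : Type*} (s : Finset α) :
    #s ^ 2 = #s.offDiag + #s := by
  rw [offDiag_card, sq, Nat.sub_add_cancel (Nat.le_mul_self _)]

theorem card_offDiag_le_sq {α : Type*} (s : Finset α) : #s.offDiag ≤ #s ^ 2 :=
  sq_card_eq_card_offDiag_add_card s ▸ Nat.le_add_right _ _

variable (k) in
theorem sum_sq_card_pointsOn_spannedLines {S Q : Finset P} (hQ : Q ⊆ S) :
    ∑ l ∈ spannedLines k S, #(pointsOn Q l) ^ 2 =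
      #Q.offDiag + ∑ l ∈ spannedLines k S, #(pointsOn Q l) := by
  simp only [sq_card_eq_card_offDiag_add_card, sum_add_distrib,
    ← card_offDiag_eq_sum_spannedLines k hQ]

theorem card_pointsOn_le_one_of_notMem {S : Finset P} {E l : AffineSubspace k P} {b : P}
    (hl : finrank k l.direction = 1) (hbl : b ∈ l) (hbE : b ∉ E) :
    #(pointsOn (pointsOn S E) l) ≤ 1 := by
  refine card_le_one.2 fun p hp q hq ↦ ?_
  by_contra hpq
  simp only [mem_pointsOn] at hp hq
  have hlE : l ≤ E := line_eq_of_mem_of_mem hl hpq hp.2 hq.2 ▸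
    affineSpan_pair_le_of_mem_of_mem hp.1.2 hq.1.2
  exact hbE (hlE hbl)

theorem sq_card_pointsOn_sdiff_mul_card_pointsOn_le [DecidableEq P] (S : Finset P)
    (E : AffineSubspace k P) {l : AffineSubspace k P} (hl : finrank k l.direction = 1) :
    (#(pointsOn (S \ pointsOn S E) l) * #(pointsOn (pointsOn S E) l)) ^ 2 ≤
      #(pointsOn (S \ pointsOn S E) l) * #(pointsOn (pointsOn S E) l) +
        #(pointsOn (S \ pointsOn S E) l).offDiag := by
  obtain hempty | ⟨b, hb⟩ := (pointsOn (S \ pointsOn S E) l).eq_empty_or_nonempty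
  · simp [hempty]
  obtain ⟨hbS, hbl⟩ := mem_pointsOn.1 hb
  have hbE : b ∉ E := fun hbE ↦
    (mem_sdiff.1 hbS).2 (mem_pointsOn.2 ⟨(mem_sdiff.1 hbS).1, hbE⟩)
  have hone : #(pointsOn (pointsOn S E) l) ≤ 1 := card_pointsOn_le_one_of_notMem hl hbl hbE
  have hsq := sq_card_eq_card_offDiag_add_card (pointsOn (S \ pointsOn S E) l)
  interval_cases #(pointsOn (pointsOn S E) l) <;> lia

theorem card_sub_card_pointsOn_mul_sq_le (S : Finset P) (E : AffineSubspace k P) :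
    (#S - #(pointsOn S E)) * #(pointsOn S E) ^ 2 ≤ #(spannedLines k S) * #S := by
  classical
  set A := pointsOn S E
  set B := S \ A with hB
  have hAS : A ⊆ S := pointsOn_subset S E
  have hBS : B ⊆ S := sdiff_subset
  have hprod : #B * #A = ∑ l ∈ spannedLines k S, #(pointsOn B l) * #(pointsOn A l) :=
    card_mul_card_eq_sum_spannedLines k hBS hAS sdiff_disjoint
  rw [← card_sdiff_of_subset hAS, ← hB]
  obtain hB0 | hB0 := Nat.eq_zero_or_pos #B
  · simp [hB0]
  refine Nat.le_of_mul_le_mul_left ?_ hB0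
  calc #B * (#B * #A ^ 2) = (#B * #A) ^ 2 := by ring
    _ ≤ #(spannedLines k S) * ∑ l ∈ spannedLines k S, (#(pointsOn B l) * #(pointsOn A l)) ^ 2 :=
      hprod ▸ sq_sum_le_card_mul_sum_sq
    _ ≤ #(spannedLines k S) * (#B * #A + #B.offDiag) := by
      rw [hprod, card_offDiag_eq_sum_spannedLines k hBS, ← sum_add_distrib]
      gcongr with l hl
      exact sq_card_pointsOn_sdiff_mul_card_pointsOn_le S E (mem_spannedLines.1 hl).1
    _ ≤ #(spannedLines k S) * (#B * #A + #B ^ 2) := by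
      gcongr
      exact card_offDiag_le_sq B
    _ = #B * (#(spannedLines k S) * #S) := by
      rw [← card_sdiff_add_card_eq_card hAS]
      ring

variable (k) in
theorem sq_sum_card_pointsOn_le (S : Finset P) :
    (∑ l ∈ spannedLines k S, #(pointsOn S l)) ^ 2 ≤ 2 * #(spannedLines k S) * #S ^ 2 := by
  have hle : ∑ l ∈ spannedLines k S, #(pointsOn S l) ≤ #S.offDiag := by
    rw [card_offDiag_eq_sum_spannedLines k Subset.rfl]
    refine sum_le_sum fun l hl ↦ ?_
    obtain ⟨-, p, hp, q, hq, hpq, hpl, hql⟩ := mem_spannedLines.1 hl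
    have htwo : 1 < #(pointsOn S l) :=
      one_lt_card.2 ⟨p, mem_pointsOn.2 ⟨hp, hpl⟩, q, mem_pointsOn.2 ⟨hq, hql⟩, hpq⟩
    have := sq_card_eq_card_offDiag_add_card (pointsOn S l)
    nlinarith
  calc (∑ l ∈ spannedLines k S, #(pointsOn S l)) ^ 2
    _ ≤ #(spannedLines k S) * ∑ l ∈ spannedLines k S, #(pointsOn S l) ^ 2 :=
      sq_sum_le_card_mul_sum_sq
    _ ≤ #(spannedLines k S) * (#S.offDiag + #S.offDiag) := by
      rw [sum_sq_card_pointsOn_spannedLines k Subset.rfl]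
      gcongr
    _ ≤ #(spannedLines k S) * (#S ^ 2 + #S ^ 2) := by
      gcongr <;> exact card_offDiag_le_sq S
    _ = 2 * #(spannedLines k S) * #S ^ 2 := by ring

theorem card_pointsOn_eq_sum_colors {κ : Type*} [Fintype κ] [DecidableEq κ] (S : Finset P)
    (χ : P → κ) (l : AffineSubspace k P) :
    #(pointsOn S l) = ∑ i, #(pointsOn {p ∈ S | χ p = i} l) := by
  rw [card_eq_sum_card_fiberwise (f := χ) fun _ _ ↦ mem_coe.2 (mem_univ _)]
  refine sum_congr rfl fun i _ ↦ congrArg card ?_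
  ext p
  simp only [mem_filter, mem_pointsOn]
  tauto

theorem card_offDiag_pointsOn_le_of_misses_color {κ : Type*} [Fintype κ] [DecidableEq κ]
    (S : Finset P) (χ : P → κ) {l : AffineSubspace k P} {i₀ : κ} (hi₀ : ∀ p ∈ l, χ p ≠ i₀) :
    #(pointsOn S l).offDiag ≤
      (Fintype.card κ - 1) * ∑ i, #(pointsOn {p ∈ S | χ p = i} l) ^ 2 := by
  have hempty : #(pointsOn {p ∈ S | χ p = i₀} l) = 0 :=
    card_eq_zero.2 <| eq_empty_of_forall_notMem fun p hp ↦ by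
      simp only [mem_pointsOn, mem_filter] at hp
      exact hi₀ p hp.2 hp.1.2
  calc #(pointsOn S l).offDiag ≤ #(pointsOn S l) ^ 2 := card_offDiag_le_sq _
    _ = (∑ i ∈ univ.erase i₀, #(pointsOn {p ∈ S | χ p = i} l)) ^ 2 := by
      rw [card_pointsOn_eq_sum_colors S χ l, ← add_sum_erase univ _ (mem_univ i₀), hempty,
        zero_add]
    _ ≤ #(univ.erase i₀) * ∑ i ∈ univ.erase i₀, #(pointsOn {p ∈ S | χ p = i} l) ^ 2 :=
      sq_sum_le_card_mul_sum_sq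
    _ ≤ (Fintype.card κ - 1) * ∑ i, #(pointsOn {p ∈ S | χ p = i} l) ^ 2 := by
      rw [card_erase_of_mem (mem_univ _), card_univ]
      gcongr
      exact erase_subset _ _

theorem card_offDiag_le_of_forall_line_misses_color {κ : Type*} [Fintype κ] [DecidableEq κ]
    {S : Finset P} (χ : P → κ) (hχ : ∀ l ∈ spannedLines k S, ∃ i, ∀ p ∈ l, χ p ≠ i) :
    #S.offDiag ≤ (Fintype.card κ - 1) *
      (∑ i, #{p ∈ S | χ p = i} ^ 2 + ∑ l ∈ spannedLines k S, #(pointsOn S l)) :=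
  calc #S.offDiag = ∑ l ∈ spannedLines k S, #(pointsOn S l).offDiag :=
        card_offDiag_eq_sum_spannedLines k Subset.rfl
    _ ≤ ∑ l ∈ spannedLines k S,
          (Fintype.card κ - 1) * ∑ i, #(pointsOn {p ∈ S | χ p = i} l) ^ 2 :=
      sum_le_sum fun l hl ↦
        (hχ l hl).elim fun _ hi ↦ card_offDiag_pointsOn_le_of_misses_color S χ hi
    _ = (Fintype.card κ - 1) * (∑ i, #{p ∈ S | χ p = i}.offDiag +
          ∑ l ∈ spannedLines k S, #(pointsOn S l)) := by
      rw [← mul_sum, sum_comm]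
      simp only [sum_sq_card_pointsOn_spannedLines k (filter_subset _ S), sum_add_distrib,
        card_pointsOn_eq_sum_colors S χ]
      rw [sum_comm (s := univ)]
    _ ≤ _ := by
      gcongr with i
      exact card_offDiag_le_sq _

end Counting

section Median

open Finset

variable {ι α : Type*} [LinearOrder α]

/-- `c` is a median of the values of `f` on `A`: at most half of them are smaller than `c`, and at
most half are larger. -/
structure IsMedian (A : Finset ι) (f : ι → α) (c : α) : Prop where
  two_mul_card_lt_le : 2 * #{i ∈ A | f i < c} ≤ #A
  two_mul_card_gt_le : 2 * #{i ∈ A | c < f i} ≤ #A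

theorem IsMedian.exists_le {A : Finset ι} {f : ι → α} {c : α} (h : IsMedian A f c)
    (hA : A.Nonempty) : ∃ i ∈ A, f i ≤ c := by
  by_contra! hlt
  have := h.two_mul_card_gt_le
  rw [filter_true_of_mem hlt] at this
  have := hA.card_pos
  lia

theorem IsMedian.exists_ge {A : Finset ι} {f : ι → α} {c : α} (h : IsMedian A f c)
    (hA : A.Nonempty) : ∃ i ∈ A, c ≤ f i := by
  by_contra! hlt
  have := h.two_mul_card_lt_le
  rw [filter_true_of_mem hlt] at this
  have := hA.card_pos
  lia

theorem IsMedian.le_of_forall_le {A B : Finset ι} {f : ι → α} {c d : α} (hc : IsMedian A f c)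
    (hd : IsMedian B f d) (hA : A.Nonempty) (hB : B.Nonempty)
    (hAB : ∀ i ∈ A, ∀ j ∈ B, f i ≤ f j) : c ≤ d := by
  obtain ⟨i, hi, hci⟩ := hc.exists_ge hA
  obtain ⟨j, hj, hjd⟩ := hd.exists_le hB
  exact hci.trans ((hAB i hi j hj).trans hjd)

theorem IsMedian.two_mul_card_le_le {A : Finset ι} {f : ι → α} {c : α} (h : IsMedian A f c) :
    2 * #{i ∈ A | f i ≤ c} ≤ #A + 2 * #{i ∈ A | f i = c} := by
  classical
  have hsplit : #{i ∈ A | f i ≤ c} ≤ #{i ∈ A | f i < c} + #{i ∈ A | f i = c} := by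
    refine (card_le_card fun i hi ↦ ?_).trans (card_union_le _ _)
    simpa only [mem_union, mem_filter, ← and_or_left, ← le_iff_lt_or_eq] using hi
  have := h.two_mul_card_lt_le
  lia

/- A median of `A` is the least value of `max f(T)` over the subsets `T` containing at least half
of `A`; this min-max formula is continuous in `f`. -/
theorem exists_continuous_isMedian {X : Type*} [TopologicalSpace X] [TopologicalSpace α]
    [OrderClosedTopology α] [Nonempty α] (A : Finset ι) (F : X → ι → α)
    (hF : ∀ i ∈ A, Continuous fun t ↦ F t i) :
    ∃ μ : X → α, Continuous μ ∧ ∀ t, IsMedian A (F t) (μ t) := by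
  classical
  obtain rfl | hA := A.eq_empty_or_nonempty
  · exact ⟨fun _ ↦ Classical.arbitrary α, continuous_const, fun _ ↦ ⟨by simp, by simp⟩⟩
  set halves := {T ∈ A.powerset | #A ≤ 2 * #T}
  have hsub {T : Finset ι} (hT : T ∈ halves) : T ⊆ A := mem_powerset.1 (mem_filter.1 hT).1
  have hne (T : halves) : T.1.Nonempty :=
    card_pos.1 (by have := hA.card_pos; have := (mem_filter.1 T.2).2; lia)
  have hhalves : halves.attach.Nonempty := ⟨⟨A, by simp [halves]; lia⟩, mem_attach _ _⟩
  refine ⟨fun t ↦ halves.attach.inf' hhalves fun T ↦ T.1.sup' (hne T) (F t),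
    .finset_inf'_apply _ fun T _ ↦ .finset_sup'_apply _ fun i hi ↦ hF i (hsub T.2 hi),
    fun t ↦ ⟨?_, ?_⟩⟩
  · by_contra! hlt
    set c := halves.attach.inf' hhalves fun T ↦ T.1.sup' (hne T) (F t)
    let T : halves := ⟨{i ∈ A | F t i < c}, by simp [halves]; lia⟩
    have hTc : T.1.sup' (hne T) (F t) < c := (sup'_lt_iff _).2 fun i hi ↦ (mem_filter.1 hi).2
    exact hTc.not_ge (inf'_le _ (mem_attach _ T))
  · obtain ⟨T, -, hT⟩ := exists_mem_eq_inf' hhalves fun T ↦ T.1.sup' (hne T) (F t)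
    simp only [hT]
    have hle : {i ∈ A | T.1.sup' (hne T) (F t) < F t i} ⊆ A \ T.1 := fun i hi ↦
      mem_sdiff.2 ⟨(mem_filter.1 hi).1, fun hiT ↦ (le_sup' (F t) hiT).not_gt (mem_filter.1 hi).2⟩
    have := card_le_card hle
    have := card_sdiff_add_card_eq_card (hsub T.2)
    have := (mem_filter.1 T.2).2
    lia

theorem exists_isMedian_isMedian_sub_mul (A B : Finset ι) (x y : ι → ℝ)
    (hAB : ∀ i ∈ A, ∀ j ∈ B, x i < x j) :
    ∃ t c : ℝ, IsMedian A (fun i ↦ y i - t * x i) c ∧ IsMedian B (fun i ↦ y i - t * x i) c := by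
  obtain ⟨μ, hμ, hμA⟩ := exists_continuous_isMedian A (fun t i ↦ y i - t * x i) (by fun_prop)
  obtain ⟨ν, hν, hνB⟩ := exists_continuous_isMedian B (fun t i ↦ y i - t * x i) (by fun_prop)
  obtain rfl | hA := A.eq_empty_or_nonempty
  · exact ⟨0, ν 0, ⟨by simp, by simp⟩, hνB 0⟩
  obtain rfl | hB := B.eq_empty_or_nonempty
  · exact ⟨0, μ 0, hμA 0, ⟨by simp, by simp⟩⟩
  obtain ⟨M, hM⟩ : ∃ M, ∀ i ∈ A, ∀ j ∈ B, |y j - y i| ≤ M * (x j - x i) := by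
    obtain ⟨M, hM⟩ := ((A ×ˢ B).image fun z ↦ |y z.2 - y z.1| / (x z.2 - x z.1)).exists_le
    exact ⟨M, fun i hi j hj ↦ (div_le_iff₀ (sub_pos.2 (hAB i hi j hj))).1
      (hM _ (mem_image_of_mem _ (mk_mem_product hi hj)))⟩
  -- Between slopes `-M` and `M` the median of `A` passes from below that of `B` to above it.
  have hneg : μ (-M) ≤ ν (-M) := (hμA _).le_of_forall_le (hνB _) hA hB fun i hi j hj ↦ by
    linarith [neg_le_of_abs_le (hM i hi j hj)]
  have hpos : ν M ≤ μ M := (hνB _).le_of_forall_le (hμA _) hB hA fun j hj i hi ↦ by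
    linarith [le_of_abs_le (hM i hi j hj)]
  obtain ⟨t, ht⟩ := mem_range_of_exists_le_of_exists_ge (hμ.sub hν)
    ⟨-M, sub_nonpos.2 hneg⟩ ⟨M, sub_nonneg.2 hpos⟩
  exact ⟨t, μ t, hμA t, sub_eq_zero.1 ht ▸ hνB t⟩

/-- The quadrant of `p` with respect to the axes `f = a` and `g = b`. The quadrants are half-open,
so they partition the whole domain. -/
def quadrant (f g : ι → α) (a b : α) (p : ι) : Bool × Bool :=
  (decide (f p ≤ a), decide (g p ≤ b))

theorem quadrant_eq_iff {f g : ι → α} {a b : α} {p : ι} {u v : Bool} :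
    quadrant f g a b p = (u, v) ↔ (f p ≤ a ↔ u) ∧ (g p ≤ b ↔ v) := by
  cases u <;> cases v <;> simp [quadrant]

theorem exists_four_mul_card_quadrant_le (S : Finset ι) (x y : ι → ℝ) (m : ℕ)
    (hx : ∀ a, #{p ∈ S | x p = a} ≤ m) (hy : ∀ t c, #{p ∈ S | y p - t * x p = c} ≤ m) :
    ∃ a t c, ∀ i, 4 * #{p ∈ S | quadrant x (fun p ↦ y p - t * x p) a c p = i} ≤ #S + 6 * m := by
  classical
  obtain ⟨μ, -, hμ⟩ := exists_continuous_isMedian S (fun _ : Unit ↦ x) fun _ _ ↦ continuous_const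
  have ha := hμ ()
  set a := μ ()
  obtain ⟨t, c, hleft, hright⟩ :=
    exists_isMedian_isMedian_sub_mul {p ∈ S | x p ≤ a} {p ∈ S | a < x p} x y fun i hi j hj ↦
      (mem_filter.1 hi).2.trans_lt (mem_filter.1 hj).2
  have hxa := hx a
  have hyc (A : Finset ι) (hA : A ⊆ S) : #{p ∈ A | y p - t * x p = c} ≤ m :=
    (card_le_card (filter_subset_filter _ hA)).trans (hy t c)
  have hyl := hyc {p ∈ S | x p ≤ a} (filter_subset _ _)
  have hyr := hyc {p ∈ S | a < x p} (filter_subset _ _)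
  refine ⟨a, t, c, ?_⟩
  have := ha.two_mul_card_le_le
  have := ha.two_mul_card_gt_le
  have := hleft.two_mul_card_le_le
  have := hleft.two_mul_card_gt_le
  have := hright.two_mul_card_le_le
  have := hright.two_mul_card_gt_le
  simp only [filter_filter] at *
  rintro ⟨_ | _, _ | _⟩ <;>
    simp only [quadrant, Prod.mk.injEq, decide_eq_true_eq, decide_eq_false_iff_not, not_le] <;>
    lia

end Median

section Quadrant

open scoped Affine

variable {k V P : Type*} [Ring k] [LinearOrder k] [IsOrderedRing k] [AddCommGroup V]
  [Module k V] [AddTorsor V P]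

theorem isLowerSet_or_isUpperSet_setOf_lineMap_le (f : P →ᵃ[k] k) (a : k) (p q : P) :
    IsLowerSet {t : k | f (AffineMap.lineMap p q t) ≤ a} ∨
      IsUpperSet {t : k | f (AffineMap.lineMap p q t) ≤ a} := by
  simp only [AffineMap.apply_lineMap]
  exact (le_total (f p) (f q)).imp
    (fun h _ _ hst hs ↦ (AffineMap.lineMap_mono h hst).trans hs)
    (fun h _ _ hst hs ↦ (AffineMap.lineMap_anti h hst).trans hs)

theorem exists_forall_mem_line_quadrant_ne (f g : P →ᵃ[k] k) (a b : k) (p q : P) :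
    ∃ i, ∀ r ∈ line[k, p, q], quadrant f g a b r ≠ i := by
  set s : Set k := {t | f (AffineMap.lineMap p q t) ≤ a}
  set t : Set k := {t | g (AffineMap.lineMap p q t) ≤ b}
  have hst : s ⊆ t ∨ t ⊆ s ∨ s ⊆ tᶜ ∨ tᶜ ⊆ s := by
    obtain hs | hs : IsLowerSet s ∨ IsUpperSet s :=
        isLowerSet_or_isUpperSet_setOf_lineMap_le f a p q <;>
      obtain ht | ht : IsLowerSet t ∨ IsUpperSet t :=
        isLowerSet_or_isUpperSet_setOf_lineMap_le g b p q
    · exact (hs.total ht).imp_right .inl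
    · exact .inr (.inr (hs.total ht.compl))
    · exact .inr (.inr (hs.total ht.compl))
    · exact (hs.total ht).imp_right .inl
  suffices h : ∃ i, ∀ x, quadrant f g a b (AffineMap.lineMap p q x) ≠ i from
    h.imp fun i hi r hr ↦ by
      obtain ⟨x, rfl⟩ := mem_affineSpan_pair_iff_exists_lineMap_eq.1 hr
      exact hi x
  have hempty (u v : Bool) (huv : ∀ x, ¬((x ∈ s ↔ u) ∧ (x ∈ t ↔ v))) :
      ∃ i, ∀ x, quadrant f g a b (AffineMap.lineMap p q x) ≠ i :=
    ⟨(u, v), fun x hx ↦ huv x (quadrant_eq_iff.1 hx)⟩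
  obtain h | h | h | h := hst
  · exact hempty true false fun x ↦ by simpa using @h x
  · exact hempty false true fun x ↦ by simpa [not_imp_not] using @h x
  · exact hempty true true fun x ↦ by simpa using @h x
  · exact hempty false false fun x ↦ by simpa [not_imp_comm] using @h x

end Quadrant

section Projection

open Module Finset

variable {k V P : Type*} [Field k] [AddCommGroup V] [Module k V] [AddTorsor V P]

theorem exists_dual_forall_mem_ne_zero [Infinite k] (T : Finset V) :
    ∃ ξ : Dual k V, ∀ v ∈ T, v ≠ 0 → ξ v ≠ 0 := by
  obtain ⟨ξ, hξ⟩ := exists_dual_forall_apply_ne_zero (K := k)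
    (fun v : {v ∈ (T : Set V) | v ≠ 0} ↦ v.1) fun v ↦ v.2.2
  exact ⟨ξ, fun v hv hv0 ↦ hξ ⟨v, hv, hv0⟩⟩

theorem collinear_of_forall_smul_vsub_eq {s : Set P} (ξ : Dual k V)
    (hξ : ∀ p ∈ s, ∀ q ∈ s, ξ (q -ᵥ p) = 0 → q = p)
    (h : ∀ p ∈ s, ∀ q ∈ s, ∀ r ∈ s, ξ (q -ᵥ p) • (r -ᵥ p) = ξ (r -ᵥ p) • (q -ᵥ p)) :
    Collinear k s := by
  obtain hs | ⟨p, hp, q, hq, hpq⟩ := s.subsingleton_or_nontrivial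
  · exact hs.induction_on (collinear_empty k P) (collinear_singleton k)
  have hqp : ξ (q -ᵥ p) ≠ 0 := fun h0 ↦ hpq (hξ p hp q hq h0).symm
  refine (collinear_iff_of_mem hp).2 ⟨(ξ (q -ᵥ p))⁻¹ • (q -ᵥ p), fun r hr ↦ ⟨ξ (r -ᵥ p), ?_⟩⟩
  rw [smul_comm, ← h p hp q hq r hr, inv_smul_smul₀ hqp, vsub_vadd]

theorem exists_affineMap_injOn_forall_collinear [Infinite k] (S : Finset P) :
    ∃ x y : P →ᵃ[k] k, Set.InjOn x S ∧
      ∀ t c, Collinear k {p ∈ (S : Set P) | y p - t * x p = c} := by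
  classical
  obtain rfl | ⟨p₀, -⟩ := S.eq_empty_or_nonempty
  · exact ⟨0, 0, by simp, by simp [collinear_empty]⟩
  let affine (ξ : Dual k V) : P →ᵃ[k] k :=
    ξ.toAffineMap.comp (AffineEquiv.vaddConst k p₀).symm.toAffineMap
  have affine_sub (ξ : Dual k V) (p q : P) : affine ξ p - affine ξ q = ξ (p -ᵥ q) := by
    simp [affine, ← map_sub]
  obtain ⟨ξ, hξ⟩ := exists_dual_forall_mem_ne_zero (k := k)
    ((S ×ˢ S).image fun z ↦ z.1 -ᵥ z.2)
  obtain ⟨η, hη⟩ := exists_dual_forall_mem_ne_zero (k := k)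
    ((S ×ˢ S ×ˢ S).image fun z ↦
      ξ (z.2.1 -ᵥ z.1) • (z.2.2 -ᵥ z.1) - ξ (z.2.2 -ᵥ z.1) • (z.2.1 -ᵥ z.1))
  have hξS : ∀ p ∈ S, ∀ q ∈ S, ξ (q -ᵥ p) = 0 → q = p := fun p hp q hq h ↦ by
    by_contra hqp
    exact hξ _ (mem_image_of_mem _ (mk_mem_product hq hp)) (vsub_ne_zero.2 hqp) h
  refine ⟨affine ξ, affine η, fun q hq p hp h ↦ hξS p hp q hq ?_, fun t c ↦ ?_⟩
  · rw [← affine_sub, h, sub_self]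
  refine collinear_of_forall_smul_vsub_eq ξ (fun p hp q hq ↦ hξS p hp.1 q hq.1)
    fun p hp q hq r hr ↦ ?_
  have hη_eq : ∀ u ∈ {p ∈ (S : Set P) | affine η p - t * affine ξ p = c},
      η (u -ᵥ p) = t * ξ (u -ᵥ p) := fun u hu ↦ by
    rw [← affine_sub, ← affine_sub]
    linear_combination hu.2 - hp.2
  by_contra hne
  refine hη _ (mem_image_of_mem _ (mk_mem_product hp.1 (mk_mem_product hq.1 hr.1)))
    (sub_ne_zero.2 hne) ?_
  simp only [map_sub, map_smul, smul_eq_mul, hη_eq q hq, hη_eq r hr]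
  ring

end Projection

section ErdosBeck

open Module Finset
open scoped Affine

variable {V P : Type*} [AddCommGroup V] [Module ℝ V] [AddTorsor V P]

theorem exists_coloring_forall_line_misses_color {S : Finset P} {m : ℕ}
    (hm : ∀ T ⊆ S, Collinear ℝ (T : Set P) → #T ≤ m) :
    ∃ χ : P → Bool × Bool, (∀ p q, ∃ i, ∀ r ∈ line[ℝ, p, q], χ r ≠ i) ∧
      ∀ i, 4 * #{p ∈ S | χ p = i} ≤ #S + 6 * m := by
  obtain ⟨x, y, hx, hxy⟩ := exists_affineMap_injOn_forall_collinear (k := ℝ) S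
  have hlevel (a : ℝ) : #{p ∈ S | x p = a} ≤ m := by
    refine hm _ (filter_subset _ S) (Set.Subsingleton.induction_on (fun p hp q hq ↦ ?_)
      (collinear_empty ℝ P) (collinear_singleton ℝ))
    rw [mem_coe, mem_filter] at hp hq
    exact hx hp.1 hq.1 (hp.2.trans hq.2.symm)
  obtain ⟨a, t, c, hcard⟩ := exists_four_mul_card_quadrant_le S x y m hlevel fun t c ↦
    hm _ (filter_subset _ S) (by simpa only [coe_filter, mem_coe] using hxy t c)
  exact ⟨_, exists_forall_mem_line_quadrant_ne x (y - t • x) a c, hcard⟩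

/- Four equal quadrants would give `3 * 4 * (1 / 4) ^ 2 = 3 / 4 < 1` in the colouring inequality;
the factor `100` keeps the error in the size of the quadrants below what this leaves for the
incidences. -/
theorem sq_card_le_of_forall_collinear_card_le {S : Finset P}
    (hS : ∀ T ⊆ S, Collinear ℝ (T : Set P) → 100 * #T ≤ #S) :
    #S ^ 2 ≤ 1000 * #(spannedLines ℝ S) := by
  obtain rfl | ⟨p, hp⟩ := S.eq_empty_or_nonempty
  · simp
  set m := #S / 100
  set I := ∑ l ∈ spannedLines ℝ S, #(pointsOn S l)
  have hcard : 100 ≤ #S := by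
    simpa using hS {p} (singleton_subset_iff.2 hp) (by simpa using collinear_singleton ℝ p)
  obtain ⟨χ, hline, hχ⟩ := exists_coloring_forall_line_misses_color (S := S) (m := m)
    fun T hT hcol ↦ by have := hS T hT hcol; lia
  have hcolors : #S.offDiag ≤ 3 * (∑ i, #{p ∈ S | χ p = i} ^ 2 + I) :=
    card_offDiag_le_of_forall_line_misses_color χ fun l hl ↦ by
      obtain ⟨hl, p, -, q, -, hpq, hpl, hql⟩ := mem_spannedLines.1 hl
      exact line_eq_of_mem_of_mem hl hpq hpl hql ▸ hline p q
  have hcells : 160000 * ∑ i, #{p ∈ S | χ p = i} ^ 2 ≤ 4 * (106 * #S) ^ 2 := by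
    rw [mul_sum]
    refine (sum_le_card_nsmul univ _ ((106 * #S) ^ 2) fun i _ ↦ ?_).trans_eq (by simp)
    have hi : 400 * #{p ∈ S | χ p = i} ≤ 106 * #S := by
      have := hχ i
      have : 100 * m ≤ #S := Nat.mul_div_le _ _
      lia
    calc 160000 * #{p ∈ S | χ p = i} ^ 2 = (400 * #{p ∈ S | χ p = i}) ^ 2 := by ring
      _ ≤ (106 * #S) ^ 2 := by gcongr
  have hI : #S ^ 2 ≤ 21 * I := by
    have hpairs := sq_card_eq_card_offDiag_add_card S
    have hdiag : 100 * #S ≤ #S ^ 2 := sq #S ▸ Nat.mul_le_mul_right _ hcard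
    linarith
  have hlines : I ^ 2 ≤ 2 * #(spannedLines ℝ S) * #S ^ 2 := sq_sum_card_pointsOn_le ℝ S
  refine Nat.le_of_mul_le_mul_left ?_ (pow_pos (card_pos.2 ⟨p, hp⟩) 2)
  calc #S ^ 2 * #S ^ 2 ≤ 21 * I * (21 * I) := Nat.mul_le_mul hI hI
    _ = 441 * I ^ 2 := by ring
    _ ≤ 441 * (2 * #(spannedLines ℝ S) * #S ^ 2) := by gcongr
    _ = #S ^ 2 * (882 * #(spannedLines ℝ S)) := by ring
    _ ≤ #S ^ 2 * (1000 * #(spannedLines ℝ S)) := by gcongr; norm_num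

theorem erdos_beck_s12 {S : Finset P} {x : ℝ}
    (hS : ∀ T ⊆ S, Collinear ℝ (T : Set P) → (#T : ℝ) ≤ #S - x) :
    x * #S ≤ 10000 * #(spannedLines ℝ S) := by
  have hx : x ≤ #S := by simpa using hS ∅ (empty_subset S) (by simpa using collinear_empty ℝ P)
  by_cases hpoor : ∀ T ⊆ S, Collinear ℝ (T : Set P) → 100 * #T ≤ #S
  · have hsq : (#S : ℝ) ^ 2 ≤ 1000 * #(spannedLines ℝ S) := by
      exact_mod_cast sq_card_le_of_forall_collinear_card_le hpoor
    nlinarith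
  · push Not at hpoor
    obtain ⟨T, hTS, hcol, hT⟩ := hpoor
    set E := affineSpan ℝ (T : Set P)
    have hTE : #T ≤ #(pointsOn S E) :=
      card_le_card fun p hp ↦ mem_pointsOn.2 ⟨hTS hp, mem_affineSpan ℝ hp⟩
    have hEcol : Collinear ℝ (E : Set P) := by
      rwa [Collinear, ← AffineSubspace.direction, direction_affineSpan]
    have hE : (#(pointsOn S E) : ℝ) ≤ #S - x :=
      hS _ (pointsOn_subset S E) (hEcol.subset fun p hp ↦ (mem_pointsOn.1 hp).2)
    have hEle : #(pointsOn S E) ≤ #S := card_le_card (pointsOn_subset S E)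
    have hrich : ((#S : ℝ) - #(pointsOn S E)) * #(pointsOn S E) ^ 2 ≤
        #(spannedLines ℝ S) * #S := by
      rw [← Nat.cast_sub hEle]
      exact_mod_cast card_sub_card_pointsOn_mul_sq_le S E
    have hk : (#S : ℝ) ≤ 100 * #(pointsOn S E) := by
      exact_mod_cast hT.le.trans (Nat.mul_le_mul_left 100 hTE)
    have hpos : (0 : ℝ) < #S := by
      have := card_le_card hTS
      exact_mod_cast (by lia : 0 < #S)
    refine le_of_mul_le_mul_right ?_ hpos
    calc x * #S * #S = x * (#S : ℝ) ^ 2 := by ring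
      _ ≤ (#S - #(pointsOn S E)) * (100 * #(pointsOn S E)) ^ 2 := by
        gcongr
        · exact sub_nonneg.2 (mod_cast hEle)
        · linarith
      _ = 10000 * ((#S - #(pointsOn S E)) * #(pointsOn S E) ^ 2) := by ring
      _ ≤ 10000 * (#(spannedLines ℝ S) * #S) := by gcongr
      _ = 10000 * #(spannedLines ℝ S) * #S := by ring

end ErdosBeck

theorem erdos_beck_corollary_general {V P : Type*} [AddCommGroup V] [Module ℝ V] [Nontrivial V]
    [AddTorsor V P] (β : ℝ) (hβ1 : β < 1) :
    ∃ γ : ℝ, 0 < γ ∧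
      ∀ (n : ℕ) (S : Finset P), S.card = n →
        (∃ l : AffineSubspace ℝ P, Module.finrank ℝ l.direction = 1 ∧
            ((((↑S : Set P) ∩ ↑l).ncard : ℝ) ≥ β * n)) ∨
        ({l : AffineSubspace ℝ P |
            Module.finrank ℝ l.direction = 1 ∧
            ∃ p₁ ∈ S, ∃ p₂ ∈ S, p₁ ≠ p₂ ∧ p₁ ∈ l ∧ p₂ ∈ l}.ncard : ℝ) > γ * (n : ℝ) ^ 2 := by
  refine ⟨(1 - β) / 20000, by linarith, ?_⟩
  rintro _ S rfl
  refine or_iff_not_imp_left.2 fun hrich ↦ ?_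
  push Not at hrich
  have hcol : ∀ T ⊆ S, Collinear ℝ (T : Set P) → (T.card : ℝ) < β * S.card := fun T hT hT' ↦ by
    obtain ⟨l, hl, hTl⟩ := exists_line_superset_of_collinear hT'
    refine lt_of_le_of_lt ?_ (hrich l hl)
    rw [← Set.ncard_coe_finset]
    exact_mod_cast Set.ncard_le_ncard (Set.subset_inter (Finset.coe_subset.2 hT) hTl)
      (S.finite_toSet.inter_of_left _)
  have hpos : 0 < (S.card : ℝ) := Nat.cast_pos.2 <| Nat.pos_of_ne_zero fun h ↦ by
    simpa [h] using hcol ∅ S.empty_subset (by simpa using collinear_empty ℝ P)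
  have hlines : (1 - β) * S.card * S.card ≤ 10000 * (spannedLines ℝ S).card :=
    erdos_beck_s12 fun T hT hT' ↦ by linarith [hcol T hT hT']
  have hspanned : {l : AffineSubspace ℝ P | Module.finrank ℝ l.direction = 1 ∧
      ∃ p₁ ∈ S, ∃ p₂ ∈ S, p₁ ≠ p₂ ∧ p₁ ∈ l ∧ p₂ ∈ l} = spannedLines ℝ S :=
    Set.ext fun l ↦ mem_spannedLines.symm
  rw [hspanned, Set.ncard_coe_finset]
  nlinarith [mul_pos (sub_pos.2 hβ1) (pow_pos hpos 2)]

/-- corollary of Erdős–Beck: for each `β ∈ (0,1)` there is `γ > 0` such that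
for any set `S` of `n` points in the plane, either some line contains at least `βn` points of
`S`, or the number of lines spanned by `S` exceeds `γn²`. -/
theorem erdos_beck_corollary (β : ℝ) (hβ0 : 0 < β) (hβ1 : β < 1) :
    ∃ γ : ℝ, 0 < γ ∧
      ∀ (n : ℕ) (S : Finset (Fin 2 → ℝ)), S.card = n →
        (∃ l : AffineSubspace ℝ (Fin 2 → ℝ), Module.finrank ℝ l.direction = 1 ∧
            ((((↑S : Set (Fin 2 → ℝ)) ∩ ↑l).ncard : ℝ) ≥ β * n)) ∨
        ({l : AffineSubspace ℝ (Fin 2 → ℝ) |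
            Module.finrank ℝ l.direction = 1 ∧
            ∃ p₁ ∈ S, ∃ p₂ ∈ S, p₁ ≠ p₂ ∧ p₁ ∈ l ∧ p₂ ∈ l}.ncard : ℝ) > γ * (n : ℝ) ^ 2 :=
  erdos_beck_corollary_general β hβ1
end
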